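/- arXiv:1503.06732 — 5 statements merged into one kernel-verified Lean document; each statement's English description precedes it below -/
import Mathlib

section
/- Let b ∈ (0, ∞] and let g : [0, b) → ℝ be three times continuously differentiable and satisfy the ODE 4g(η) − η⁴g(η) − 4ηg'(η) − 4η²g(η)g'(η) + 8η²g''(η) + 4η³g'''(η) = 0 for all η ∈ [0, b), with g(0) = 0, g''(0) = 0 and g'(0) > 0. Then g'(η) > 0 for all η ∈ [0, b). -/
/-!
For the radial function `u(x) = f(|x|)` in the plane with `g = f'`, the equation says
`Δ²u = r g / 4 + g g' / r` for `r > 0`, and the right-hand side is positive as long as `g` and `g'`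
are. Since `Δ²u = (1 / r) (r (Δu)')'`, the flux `r (Δu)' = r g'' + g' - g / r` then increases; it
starts from `0` because `g r / r → g' 0`, so it stays nonnegative. But at a first zero `c` of `g'`
we would have `g'' c ≤ 0` and `g c > 0`, making the flux `c g'' c - g c / c` negative.
-/

open Set Filter Topology

/-- The flux `r (Δu)'` of the Laplacian of a planar radial function `u(x) = f(|x|)`, where `g = f'`
and `g', g''` stand for the derivatives of `g`. The value at `r = 0` is not the limit there, because
of the convention `g 0 / 0 = 0`. -/
noncomputable def radialLaplacianFlux (g g' g'' : ℝ → ℝ) (r : ℝ) : ℝ :=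
  r * g'' r + g' r - g r / r

/-- The bilaplacian `Δ²u` of a planar radial function `u(x) = f(|x|)`, where `g = f'` and
`g', g'', g'''` stand for the derivatives of `g`. Only the values at `r ≠ 0` are meaningful. -/
noncomputable def radialBilaplacian (g g' g'' g''' : ℝ → ℝ) (r : ℝ) : ℝ :=
  g''' r + 2 * g'' r / r - g' r / r ^ 2 + g r / r ^ 3

theorem forall_Icc_lt_of_forall_Ico_lt {α β : Type*}
    [ConditionallyCompleteLinearOrder α] [TopologicalSpace α] [OrderTopology α]
    [LinearOrder β] [TopologicalSpace β] [ClosedIicTopology β] {f : α → β} {a b : α} {y : β}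
    (hf : ContinuousOn f (Icc a b)) (ha : y < f a)
    (hstep : ∀ c ∈ Ioc a b, (∀ x ∈ Ico a c, y < f x) → y < f c) :
    ∀ x ∈ Icc a b, y < f x := by
  by_contra! ⟨x, hx, hxy⟩
  have hcompact : IsCompact (Icc a b ∩ f ⁻¹' Iic y) :=
    isCompact_Icc.of_isClosed_subset
      (hf.preimage_isClosed_of_isClosed isClosed_Icc isClosed_Iic) inter_subset_left
  obtain ⟨c, ⟨hc, hcy⟩, hleast⟩ := hcompact.exists_isLeast ⟨x, hx, hxy⟩
  have hac : a < c := hc.1.lt_of_ne (by rintro rfl; exact ha.not_ge hcy)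
  refine (hstep c ⟨hac, hc.2⟩ fun z hz ↦ ?_).not_ge hcy
  by_contra! hzy
  exact (hleast ⟨⟨hz.1, hz.2.le.trans hc.2⟩, hzy⟩).not_gt hz.2

theorem hasDerivWithinAt_nonpos_of_isMinOn_right {f : ℝ → ℝ} {f' a b : ℝ} (hab : a < b)
    (hf : HasDerivWithinAt f f' (Icc a b) b) (hmin : IsMinOn f (Icc a b) b) : f' ≤ 0 := by
  have hcone : a - b ∈ posTangentConeAt (Icc a b) b :=
    sub_mem_posTangentConeAt_of_segment_subset (by rw [segment_symm, segment_eq_Icc hab.le])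
  have hmul : 0 ≤ (a - b) * f' := by
    simpa using hmin.localize.hasFDerivWithinAt_nonneg hf.hasFDerivWithinAt hcone
  exact nonpos_of_mul_nonneg_right hmul (sub_neg.2 hab)

section RadialFlux

variable {g g' g'' g''' : ℝ → ℝ}

theorem hasDerivAt_radialLaplacianFlux {r : ℝ} (hr : r ≠ 0) (hg : HasDerivAt g (g' r) r)
    (hg' : HasDerivAt g' (g'' r) r) (hg'' : HasDerivAt g'' (g''' r) r) :
    HasDerivAt (radialLaplacianFlux g g' g'') (r * radialBilaplacian g g' g'' g''' r) r := by
  refine ((((hasDerivAt_id' r).mul hg'').add hg').sub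
    (hg.div (hasDerivAt_id' r) hr)).congr_deriv ?_
  simp only [radialBilaplacian]
  field_simp
  ring

theorem tendsto_radialLaplacianFlux_zero {s : Set ℝ} (h0 : g 0 = 0)
    (hg : HasDerivWithinAt g (g' 0) s 0) (hg' : ContinuousWithinAt g' s 0)
    (hg'' : ContinuousWithinAt g'' s 0) :
    Tendsto (radialLaplacianFlux g g' g'') (𝓝[s \ {0}] 0) (𝓝 0) := by
  have hquot : Tendsto (fun r ↦ g r / r) (𝓝[s \ {0}] 0) (𝓝 (g' 0)) :=
    (hasDerivWithinAt_iff_tendsto_slope.1 hg).congr fun r ↦ by simp [slope_def_field, h0]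
  have hreg : Tendsto (fun r ↦ r * g'' r + g' r) (𝓝[s \ {0}] 0) (𝓝 (0 * g'' 0 + g' 0)) :=
    ((continuousWithinAt_id.mul hg'').add hg').tendsto.mono_left (nhdsWithin_mono _ sdiff_subset)
  have hflux : Tendsto (radialLaplacianFlux g g' g'') (𝓝[s \ {0}] 0)
      (𝓝 (0 * g'' 0 + g' 0 - g' 0)) := hreg.sub hquot
  simpa only [zero_mul, zero_add, sub_self] using hflux

theorem monotoneOn_radialLaplacianFlux {c : ℝ} (hg : ContinuousOn g (Ioc 0 c))
    (hg' : ContinuousOn g' (Ioc 0 c)) (hg'' : ContinuousOn g'' (Ioc 0 c))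
    (dg : ∀ r ∈ Ioo 0 c, HasDerivAt g (g' r) r) (dg' : ∀ r ∈ Ioo 0 c, HasDerivAt g' (g'' r) r)
    (dg'' : ∀ r ∈ Ioo 0 c, HasDerivAt g'' (g''' r) r)
    (hΔ : ∀ r ∈ Ioo 0 c, 0 ≤ radialBilaplacian g g' g'' g''' r) :
    MonotoneOn (radialLaplacianFlux g g' g'') (Ioc 0 c) := by
  have hcont : ContinuousOn (radialLaplacianFlux g g' g'') (Ioc 0 c) :=
    ((continuousOn_id.mul hg'').add hg').sub (hg.div continuousOn_id fun r hr ↦ hr.1.ne')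
  refine monotoneOn_of_hasDerivWithinAt_nonneg (convex_Ioc 0 c) hcont
    (f' := fun r ↦ r * radialBilaplacian g g' g'' g''' r) ?_ ?_ <;> rw [interior_Ioc]
  · exact fun r hr ↦ (hasDerivAt_radialLaplacianFlux hr.1.ne' (dg r hr) (dg' r hr)
      (dg'' r hr)).hasDerivWithinAt
  · exact fun r hr ↦ mul_nonneg hr.1.le (hΔ r hr)

theorem radialLaplacianFlux_nonneg {c : ℝ} (hc : 0 < c) (h0 : g 0 = 0)
    (hg : ∀ r ∈ Icc 0 c, HasDerivWithinAt g (g' r) (Icc 0 c) r)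
    (hg' : ∀ r ∈ Icc 0 c, HasDerivWithinAt g' (g'' r) (Icc 0 c) r)
    (hg'' : ContinuousOn g'' (Icc 0 c)) (dg'' : ∀ r ∈ Ioo 0 c, HasDerivAt g'' (g''' r) r)
    (hΔ : ∀ r ∈ Ioo 0 c, 0 ≤ radialBilaplacian g g' g'' g''' r) :
    0 ≤ radialLaplacianFlux g g' g'' c := by
  have hmono : MonotoneOn (radialLaplacianFlux g g' g'') (Ioc 0 c) :=
    monotoneOn_radialLaplacianFlux
      ((HasDerivWithinAt.continuousOn hg).mono Ioc_subset_Icc_self)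
      ((HasDerivWithinAt.continuousOn hg').mono Ioc_subset_Icc_self)
      (hg''.mono Ioc_subset_Icc_self)
      (fun r hr ↦ (hg r (Ioo_subset_Icc_self hr)).hasDerivAt (Icc_mem_nhds hr.1 hr.2))
      (fun r hr ↦ (hg' r (Ioo_subset_Icc_self hr)).hasDerivAt (Icc_mem_nhds hr.1 hr.2)) dg'' hΔ
  have hzero : (0 : ℝ) ∈ Icc 0 c := left_mem_Icc.2 hc.le
  have hlim : Tendsto (radialLaplacianFlux g g' g'') (𝓝[>] 0) (𝓝 0) := by
    simpa only [Icc_sdiff_left, nhdsWithin_Ioc_eq_nhdsGT hc] using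
      tendsto_radialLaplacianFlux_zero h0 (hg 0 hzero) (hg' 0 hzero).continuousWithinAt
        (hg'' 0 hzero)
  refine le_of_tendsto hlim ?_
  filter_upwards [Ioc_mem_nhdsGT hc] with r hr
  exact hmono hr (right_mem_Ioc.2 hc) hr.2

theorem deriv_pos_right_of_radialBilaplacian_nonneg {c : ℝ} (hc : 0 < c) (h0 : g 0 = 0)
    (hg : ∀ r ∈ Icc 0 c, HasDerivWithinAt g (g' r) (Icc 0 c) r)
    (hg' : ∀ r ∈ Icc 0 c, HasDerivWithinAt g' (g'' r) (Icc 0 c) r)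
    (hg'' : ContinuousOn g'' (Icc 0 c)) (dg'' : ∀ r ∈ Ioo 0 c, HasDerivAt g'' (g''' r) r)
    (hpos : ∀ r ∈ Ico 0 c, 0 < g' r)
    (hΔ : ∀ r ∈ Ioo 0 c, 0 < g r → 0 ≤ radialBilaplacian g g' g'' g''' r) : 0 < g' c := by
  have hgmono : StrictMonoOn g (Icc 0 c) := by
    refine strictMonoOn_of_hasDerivWithinAt_pos (convex_Icc 0 c)
      (HasDerivWithinAt.continuousOn hg) (f' := g') ?_ ?_ <;> rw [interior_Icc]
    · exact fun r hr ↦ (hg r (Ioo_subset_Icc_self hr)).mono Ioo_subset_Icc_self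
    · exact fun r hr ↦ hpos r (Ioo_subset_Ico_self hr)
  have hgpos : ∀ r ∈ Ioc 0 c, 0 < g r := fun r hr ↦
    h0 ▸ hgmono (left_mem_Icc.2 hc.le) (Ioc_subset_Icc_self hr) hr.1
  have hflux : 0 ≤ c * g'' c + g' c - g c / c :=
    radialLaplacianFlux_nonneg hc h0 hg hg' hg'' dg''
      fun r hr ↦ hΔ r hr (hgpos r (Ioo_subset_Ioc_self hr))
  by_contra! hneg
  have hmin : IsMinOn g' (Icc 0 c) c := fun r hr ↦
    hr.2.eq_or_lt.elim (fun h ↦ (congrArg g' h).ge) fun h ↦ hneg.trans (hpos r ⟨hr.1, h⟩).le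
  have hg''c : c * g'' c ≤ 0 := mul_nonpos_of_nonneg_of_nonpos hc.le
    (hasDerivWithinAt_nonpos_of_isMinOn_right hc (hg' c (right_mem_Icc.2 hc.le)) hmin)
  have hquot : 0 < g c / c := div_pos (hgpos c (right_mem_Ioc.2 hc)) hc
  linarith

theorem deriv_pos_of_radialBilaplacian_nonneg {b : ℝ} (h0 : g 0 = 0) (h1 : 0 < g' 0)
    (hg : ∀ r ∈ Icc 0 b, HasDerivWithinAt g (g' r) (Icc 0 b) r)
    (hg' : ∀ r ∈ Icc 0 b, HasDerivWithinAt g' (g'' r) (Icc 0 b) r)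
    (hg'' : ContinuousOn g'' (Icc 0 b)) (dg'' : ∀ r ∈ Ioo 0 b, HasDerivAt g'' (g''' r) r)
    (hΔ : ∀ r ∈ Ioo 0 b, 0 < g r → 0 < g' r → 0 ≤ radialBilaplacian g g' g'' g''' r) :
    ∀ r ∈ Icc 0 b, 0 < g' r := by
  refine forall_Icc_lt_of_forall_Ico_lt (HasDerivWithinAt.continuousOn hg') h1
    fun c hc hpos ↦ ?_
  have hIcc : Icc 0 c ⊆ Icc 0 b := Icc_subset_Icc_right hc.2
  have hIoo : Ioo 0 c ⊆ Ioo 0 b := Ioo_subset_Ioo_right hc.2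
  exact deriv_pos_right_of_radialBilaplacian_nonneg hc.1 h0
    (fun r hr ↦ (hg r (hIcc hr)).mono hIcc) (fun r hr ↦ (hg' r (hIcc hr)).mono hIcc)
    (hg''.mono hIcc) (fun r hr ↦ dg'' r (hIoo hr)) hpos
    fun r hr hgr ↦ hΔ r (hIoo hr) hgr (hpos r (Ioo_subset_Ico_self hr))

theorem radialBilaplacian_eq_of_selfSimilar_ode {η : ℝ} (hη : η ≠ 0)
    (hode : 4 * g η - η ^ 4 * g η - 4 * η * g' η - 4 * η ^ 2 * g η * g' η
      + 8 * η ^ 2 * g'' η + 4 * η ^ 3 * g''' η = 0) :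
    radialBilaplacian g g' g'' g''' η = η * g η / 4 + g η * g' η / η := by
  simp only [radialBilaplacian]
  field_simp
  linear_combination hode

end RadialFlux

/-- Let `b ∈ (0, ∞]` and let `g : [0, b) → ℝ` be three times continuously
differentiable and satisfy the ODE
`4g(η) − η⁴g(η) − 4ηg'(η) − 4η²g(η)g'(η) + 8η²g''(η) + 4η³g'''(η) = 0`
for all `η ∈ [0, b)`, with `g(0) = 0`, `g''(0) = 0` and `g'(0) > 0`.
Then `g'(η) > 0` for all `η ∈ [0, b)`. -/
theorem stmt0 (b : EReal) (hb : 0 < b)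
    (g g' g'' g''' : ℝ → ℝ)
    (hg : ∀ η ∈ {x : ℝ | 0 ≤ x ∧ (x : EReal) < b},
      HasDerivWithinAt g (g' η) {x : ℝ | 0 ≤ x ∧ (x : EReal) < b} η)
    (hg' : ∀ η ∈ {x : ℝ | 0 ≤ x ∧ (x : EReal) < b},
      HasDerivWithinAt g' (g'' η) {x : ℝ | 0 ≤ x ∧ (x : EReal) < b} η)
    (hg'' : ∀ η ∈ {x : ℝ | 0 ≤ x ∧ (x : EReal) < b},
      HasDerivWithinAt g'' (g''' η) {x : ℝ | 0 ≤ x ∧ (x : EReal) < b} η)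
    (hg''' : ContinuousOn g''' {x : ℝ | 0 ≤ x ∧ (x : EReal) < b})
    (hode : ∀ η ∈ {x : ℝ | 0 ≤ x ∧ (x : EReal) < b},
      4 * g η - η ^ 4 * g η - 4 * η * g' η - 4 * η ^ 2 * g η * g' η
        + 8 * η ^ 2 * g'' η + 4 * η ^ 3 * g''' η = 0)
    (h0 : g 0 = 0) (h2 : g'' 0 = 0) (h1 : 0 < g' 0) :
    ∀ η ∈ {x : ℝ | 0 ≤ x ∧ (x : EReal) < b}, 0 < g' η := by
  intro η hη
  have hsub : Icc 0 η ⊆ {x : ℝ | 0 ≤ x ∧ (x : EReal) < b} := fun x hx ↦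
    ⟨hx.1, (EReal.coe_le_coe_iff.2 hx.2).trans_lt hη.2⟩
  have dg'' : ∀ r ∈ Icc 0 η, HasDerivWithinAt g'' (g''' r) (Icc 0 η) r := fun r hr ↦
    (hg'' r (hsub hr)).mono hsub
  refine deriv_pos_of_radialBilaplacian_nonneg h0 h1
    (fun r hr ↦ (hg r (hsub hr)).mono hsub) (fun r hr ↦ (hg' r (hsub hr)).mono hsub)
    (HasDerivWithinAt.continuousOn dg'')
    (fun r hr ↦ (dg'' r (Ioo_subset_Icc_self hr)).hasDerivAt (Icc_mem_nhds hr.1 hr.2))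
    (fun r hr hgr hg'r ↦ ?_) η (right_mem_Icc.2 hη.1)
  have hr0 : 0 < r := hr.1
  rw [radialBilaplacian_eq_of_selfSimilar_ode hr0.ne' (hode r (hsub (Ioo_subset_Icc_self hr)))]
  positivity
end

section
/- Let η₀ > 0 and let g : [0, η₀] → ℝ be three times continuously differentiable, satisfy the ODE 4g(η) − η⁴g(η) − 4ηg'(η) − 4η²g(η)g'(η) + 8η²g''(η) + 4η³g'''(η) = 0 on [0, η₀], with g(0) = 0, g''(0) = 0, and suppose g(η) > 0 and g'(η) > 0 for all η ∈ (0, η₀). Then η³g''(η) − η²g'(η) + ηg(η) > 0 for all η ∈ (0, η₀]. -/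
/-!
For a planar radial function `f` with `f' = g`, all terms of the equation except `-η⁴ g` and
`-4 η² g g'` add up to `4 η³ Δ²f = 4 (η³ g'' - η² g' + η g)'`. The equation therefore reads
`(η³ g'' - η² g' + η g)' = η² g (η² / 4 + g')`, whose right-hand side is positive on `(0, η₀)`,
while the quantity being differentiated vanishes at `0`.
-/

/-- The quantity `η³ g'' - η² g' + η g`, an antiderivative of `η³ Δ²f` for a planar radial function
`f` with `f' = g`. The derivatives of `g` are separate arguments `g'` and `g''`, so that one-sided
derivatives at the endpoints of an interval are allowed. -/
def radialBilaplacianPrimitive {R : Type*} [Ring R] (g g' g'' : R → R) (η : R) : R :=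
  η ^ 3 * g'' η - η ^ 2 * g' η + η * g η

theorem radialBilaplacianPrimitive_zero {R : Type*} [Ring R] (g g' g'' : R → R) :
    radialBilaplacianPrimitive g g' g'' 0 = 0 := by
  simp [radialBilaplacianPrimitive]

theorem hasDerivWithinAt_radialBilaplacianPrimitive {𝕜 : Type*} [NontriviallyNormedField 𝕜]
    {g g' g'' : 𝕜 → 𝕜} {g₃ η : 𝕜} {s : Set 𝕜} (hg : HasDerivWithinAt g (g' η) s η)
    (hg' : HasDerivWithinAt g' (g'' η) s η) (hg'' : HasDerivWithinAt g'' g₃ s η) :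
    HasDerivWithinAt (radialBilaplacianPrimitive g g' g'')
      (η ^ 3 * g₃ + 2 * η ^ 2 * g'' η - η * g' η + g η) s η := by
  have hid := hasDerivWithinAt_id η s
  refine ((((hid.pow 3).mul hg'').sub ((hid.pow 2).mul hg')).add (hid.mul hg)).congr_deriv ?_
  simp only [Pi.pow_apply, id_eq, Nat.cast_ofNat]
  ring

theorem strictMonoOn_radialBilaplacianPrimitive {D : Set ℝ} (hD : Convex ℝ D)
    (hD₀ : 0 ∉ interior D) {g g' g'' g''' : ℝ → ℝ}
    (hg : ∀ η ∈ D, HasDerivWithinAt g (g' η) D η)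
    (hg' : ∀ η ∈ D, HasDerivWithinAt g' (g'' η) D η)
    (hg'' : ∀ η ∈ D, HasDerivWithinAt g'' (g''' η) D η)
    (hode : ∀ η ∈ interior D,
      4 * g η - η ^ 4 * g η - 4 * η * g' η - 4 * η ^ 2 * g η * g' η
        + 8 * η ^ 2 * g'' η + 4 * η ^ 3 * g''' η = 0)
    (hpos : ∀ η ∈ interior D, 0 < g η * (η ^ 2 / 4 + g' η)) :
    StrictMonoOn (radialBilaplacianPrimitive g g' g'') D := by
  have hderiv : ∀ η ∈ D, HasDerivWithinAt (radialBilaplacianPrimitive g g' g'')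
      (η ^ 3 * g''' η + 2 * η ^ 2 * g'' η - η * g' η + g η) D η := fun η hη =>
    hasDerivWithinAt_radialBilaplacianPrimitive (hg η hη) (hg' η hη) (hg'' η hη)
  refine strictMonoOn_of_hasDerivWithinAt_pos hD
    (fun η hη => (hderiv η hη).continuousWithinAt)
    (fun η hη => (hderiv η (interior_subset hη)).mono interior_subset) fun η hη => ?_
  have hη₀ : η ≠ 0 := ne_of_mem_of_not_mem hη hD₀
  calc
    0 < η ^ 2 * (g η * (η ^ 2 / 4 + g' η)) := mul_pos (sq_pos_of_ne_zero hη₀) (hpos η hη)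
    _ = η ^ 3 * g''' η + 2 * η ^ 2 * g'' η - η * g' η + g η := by
      linear_combination -(1 / 4) * hode η hη

theorem stmt2_general (η₀ : ℝ) (g g' g'' g''' : ℝ → ℝ)
    (hg : ∀ η ∈ Set.Icc 0 η₀, HasDerivWithinAt g (g' η) (Set.Icc 0 η₀) η)
    (hg' : ∀ η ∈ Set.Icc 0 η₀, HasDerivWithinAt g' (g'' η) (Set.Icc 0 η₀) η)
    (hg'' : ∀ η ∈ Set.Icc 0 η₀, HasDerivWithinAt g'' (g''' η) (Set.Icc 0 η₀) η)
    (hode : ∀ η ∈ Set.Ioo 0 η₀,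
      4 * g η - η ^ 4 * g η - 4 * η * g' η - 4 * η ^ 2 * g η * g' η
        + 8 * η ^ 2 * g'' η + 4 * η ^ 3 * g''' η = 0)
    (hpos : ∀ η ∈ Set.Ioo 0 η₀, 0 < g η * (η ^ 2 / 4 + g' η)) :
    ∀ η ∈ Set.Ioc 0 η₀, 0 < η ^ 3 * g'' η - η ^ 2 * g' η + η * g η := by
  intro η hη
  rw [← interior_Icc] at hode hpos
  have hmono : StrictMonoOn (radialBilaplacianPrimitive g g' g'') (Set.Icc 0 η₀) :=
    strictMonoOn_radialBilaplacianPrimitive (convex_Icc 0 η₀) (by simp) hg hg' hg'' hode hpos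
  calc
    0 = radialBilaplacianPrimitive g g' g'' 0 := (radialBilaplacianPrimitive_zero g g' g'').symm
    _ < radialBilaplacianPrimitive g g' g'' η :=
      hmono (Set.left_mem_Icc.2 (hη.1.le.trans hη.2)) (Set.Ioc_subset_Icc_self hη) hη.1

/-- Let `η₀ > 0` and let `g : [0, η₀] → ℝ` be `C³`, satisfy the ODE on `[0, η₀]`,
with `g(0) = 0`, `g''(0) = 0`, and suppose `g(η) > 0` and `g'(η) > 0` for all `η ∈ (0, η₀)`.
Then `η³g''(η) − η²g'(η) + ηg(η) > 0` for all `η ∈ (0, η₀]`. -/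
theorem stmt2 (η₀ : ℝ) (hη₀ : 0 < η₀)
    (g g' g'' g''' : ℝ → ℝ)
    (hg : ∀ η ∈ Set.Icc 0 η₀, HasDerivWithinAt g (g' η) (Set.Icc 0 η₀) η)
    (hg' : ∀ η ∈ Set.Icc 0 η₀, HasDerivWithinAt g' (g'' η) (Set.Icc 0 η₀) η)
    (hg'' : ∀ η ∈ Set.Icc 0 η₀, HasDerivWithinAt g'' (g''' η) (Set.Icc 0 η₀) η)
    (hg''' : ContinuousOn g''' (Set.Icc 0 η₀))
    (hode : ∀ η ∈ Set.Icc 0 η₀,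
      4 * g η - η ^ 4 * g η - 4 * η * g' η - 4 * η ^ 2 * g η * g' η
        + 8 * η ^ 2 * g'' η + 4 * η ^ 3 * g''' η = 0)
    (h0 : g 0 = 0) (h2 : g'' 0 = 0)
    (hgpos : ∀ η ∈ Set.Ioo 0 η₀, 0 < g η)
    (hg'pos : ∀ η ∈ Set.Ioo 0 η₀, 0 < g' η) :
    ∀ η ∈ Set.Ioc 0 η₀, 0 < η ^ 3 * g'' η - η ^ 2 * g' η + η * g η :=
  stmt2_general η₀ g g' g'' g''' hg hg' hg'' (fun η hη => hode η (Set.Ioo_subset_Icc_self hη))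
    fun η hη => mul_pos (hgpos η hη) (add_pos_of_nonneg_of_pos (by positivity) (hg'pos η hη))
end

section
/- Let η̄ ∈ (0, ∞] and let g : [0, η̄) → ℝ be three times continuously differentiable, satisfy the ODE 4g(η) − η⁴g(η) − 4ηg'(η) − 4η²g(η)g'(η) + 8η²g''(η) + 4η³g'''(η) = 0 on [0, η̄), with g(0) = 0, g''(0) = 0 and g'(0) > 0, and suppose g cannot be extended to a C³ solution of the same ODE on any strictly larger interval [0, η̄') with η̄' > η̄. Then η̄ < ∞, g'(η) > 0 for all η ∈ (0, η̄), and g(η) → +∞ as η → η̄ from the left. -/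
open Filter

/-!
If `g = ∂ᵣu`, the equation is the balance law `K' = g g' + r² g / 4` for the flux `K = r ∂ᵣ(Δu)`,
and `K` vanishes at the origin, so `K ≥ g² / 2` as long as `g ≥ 0`. Since `(r (r g' - g))' = r K`,
this gives `r g' ≥ g`, so `g'` can never reach a first zero: `g` and `g'` stay positive. Multiplying
`K ≥ g² / 2` by `2 r g'` and integrating yields `(r g')² ≥ r g³ / 4`, whence `1 / √g + √r / 2` is
nonincreasing. It is positive, so the solution cannot be global. At a finite endpoint the increasing
function `g` tends to `∞` or to a finite limit. In the latter case integrating the equations for `K`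
and `r (r g' - g)` gives limits of `g'` and `g''`, and the solution continues past the endpoint,
where the equation is regular.
-/

open Set Topology

section Calculus

theorem forall_mem_Icc_pos_of_forall_Ico {f : ℝ → ℝ} {a b : ℝ} (hf : ContinuousOn f (Icc a b))
    (h : ∀ c ∈ Icc a b, (∀ x ∈ Ico a c, 0 < f x) → 0 < f c) : ∀ x ∈ Icc a b, 0 < f x := by
  by_contra! ⟨x, hx, hfx⟩
  have hcompact : IsCompact (Icc a b ∩ f ⁻¹' Iic 0) :=
    isCompact_Icc.of_isClosed_subset (hf.preimage_isClosed_of_isClosed isClosed_Icc isClosed_Iic)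
      inter_subset_left
  obtain ⟨c, ⟨hc, hfc⟩, hmin⟩ := hcompact.exists_isLeast ⟨x, hx, hfx⟩
  refine (h c hc fun y hy => ?_).not_ge hfc
  by_contra! hfy
  exact (hmin ⟨⟨hy.1, hy.2.le.trans hc.2⟩, hfy⟩).not_gt hy.2

theorem le_of_tendsto_nhdsGT_of_deriv_nonneg {f f' : ℝ → ℝ} {a c l : ℝ} (hac : a < c)
    (hf : ∀ x ∈ Ioc a c, HasDerivAt f (f' x) x) (hf' : ∀ x ∈ Ioo a c, 0 ≤ f' x)
    (hl : Tendsto f (𝓝[>] a) (𝓝 l)) : l ≤ f c := by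
  have hmono : MonotoneOn f (Ioc a c) :=
    monotoneOn_of_hasDerivWithinAt_nonneg (convex_Ioc a c)
      (fun x hx => (hf x hx).continuousAt.continuousWithinAt)
      (fun x hx => (hf x (interior_subset hx)).hasDerivWithinAt)
      (fun x hx => hf' x (interior_Ioc (a := a) ▸ hx))
  refine le_of_tendsto hl ?_
  filter_upwards [Ioo_mem_nhdsGT hac] with x hx
  exact hmono ⟨hx.1, hx.2.le⟩ ⟨hac, le_rfl⟩ hx.2.le

theorem tendsto_nhdsLT_atTop_or_exists_nhds_of_monotoneOn {f : ℝ → ℝ} {a b : ℝ} (hab : a < b)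
    (hf : MonotoneOn f (Ioo a b)) :
    Tendsto f (𝓝[<] b) atTop ∨ ∃ l, Tendsto f (𝓝[<] b) (𝓝 l) := by
  by_cases hbdd : BddAbove (f '' Ioo a b)
  · exact .inr ⟨_, hf.tendsto_nhdsWithin_Ioo_left (nonempty_Ioo.2 hab) hbdd⟩
  · refine .inl (tendsto_atTop.2 fun M => ?_)
    obtain ⟨_, ⟨x, hx, rfl⟩, hM⟩ := not_bddAbove_iff.1 hbdd M
    filter_upwards [Ioo_mem_nhdsLT hx.2] with y hy
    exact hM.le.trans (hf hx ⟨hx.1.trans hy.1, hy.2⟩ hy.1.le)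

variable {E : Type*} [NormedAddCommGroup E] [NormedSpace ℝ E]

theorem exists_tendsto_nhdsLT_of_tendsto_deriv [CompleteSpace E] {f f' : ℝ → E} {b : ℝ} {l : E}
    (hf : ∀ᶠ x in 𝓝[<] b, HasDerivAt f (f' x) x) (hf' : Tendsto f' (𝓝[<] b) (𝓝 l)) :
    ∃ m, Tendsto f (𝓝[<] b) (𝓝 m) := by
  have hbound : ∀ᶠ x in 𝓝[<] b, ‖f' x‖₊ ≤ ‖l‖₊ + 1 :=
    (hf'.nnnorm.eventually_lt_const (lt_add_one _)).mono fun _ hx => hx.le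
  obtain ⟨a, hab, ha⟩ := mem_nhdsLT_iff_exists_Ioo_subset.1 (hf.and hbound)
  have hlip : LipschitzOnWith (‖l‖₊ + 1) f (Ioo a b) :=
    (convex_Ioo a b).lipschitzOnWith_of_nnnorm_hasDerivWithin_le
      (fun x hx => (ha hx).1.hasDerivWithinAt) fun x hx => (ha hx).2
  have hcauchy : Cauchy (map f (𝓝[<] b)) :=
    (cauchy_nhds.mono nhdsWithin_le_nhds).map_of_le hlip.uniformContinuousOn
      (le_principal_iff.2 (Ioo_mem_nhdsLT hab))
  exact cauchy_map_iff_exists_tendsto.1 hcauchy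

theorem hasDerivAt_ite_lt {f f' F : ℝ → E} {F' : E} {a b : ℝ} (hab : a < b)
    (hf : ∀ x ∈ Ioo a b, HasDerivAt f (f' x) x) (hF : HasDerivAt F F' b)
    (hlim : Tendsto f (𝓝[<] b) (𝓝 (F b))) (hlim' : Tendsto f' (𝓝[<] b) (𝓝 F')) :
    HasDerivAt (fun x => if x < b then f x else F x) F' b := by
  have heq : (fun x => if x < b then f x else F x) =ᶠ[𝓝[<] b] f :=
    eventually_nhdsWithin_of_forall fun x hx => if_pos hx
  have hderiv : ∀ x ∈ Ioo a b, HasDerivAt (fun x => if x < b then f x else F x) (f' x) x :=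
    fun x hx => (hf x hx).congr_of_eventuallyEq <| by
      filter_upwards [Iio_mem_nhds hx.2] with y hy using if_pos hy
  have hleft : HasDerivWithinAt (fun x => if x < b then f x else F x) F' (Iic b) b := by
    refine hasDerivWithinAt_Iic_of_tendsto_deriv (s := Ioo a b)
      (fun x hx => (hderiv x hx).differentiableAt.differentiableWithinAt) ?_ (Ioo_mem_nhdsLT hab) ?_
    · simpa only [ContinuousWithinAt, lt_irrefl, if_false] using
        (hlim.congr' heq.symm).mono_left (nhdsWithin_mono b Ioo_subset_Iio_self)
    · refine hlim'.congr' ?_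
      filter_upwards [Ioo_mem_nhdsLT hab] with x hx using (hderiv x hx).deriv.symm
  have hright : HasDerivWithinAt (fun x => if x < b then f x else F x) F' (Ici b) b :=
    hF.hasDerivWithinAt.congr (fun x hx => if_neg (not_lt.2 hx)) (if_neg (lt_irrefl b))
  simpa only [Iic_union_Ici, hasDerivWithinAt_univ] using hleft.union hright

end Calculus

section Extension

variable {E : Type*} [NormedAddCommGroup E] [NormedSpace ℝ E] [CompleteSpace E]
  {v : ℝ → E → E} {X : ℝ → E} {a b : ℝ} {p : E}

theorem exists_hasDerivAt_of_contDiffAt_uncurry (hv : ContDiffAt ℝ 1 (Function.uncurry v) (b, p)) :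
    ∃ ε > 0, ∃ Y : ℝ → E, Y b = p ∧ ∀ t ∈ Ioo (b - ε) (b + ε), HasDerivAt Y (v t (Y t)) t := by
  -- Adjoining `t' = 1` makes the equation autonomous.
  have hw : ContDiffAt ℝ 1 (fun q : ℝ × E => ((1 : ℝ), Function.uncurry v q)) (b, p) :=
    contDiffAt_const.prodMk hv
  obtain ⟨α, hα₀, ε, hε, hα⟩ :=
    hw.exists_forall_mem_closedBall_exists_eq_forall_mem_Ioo_hasDerivAt₀ b
  have hfst : ∀ t ∈ Ioo (b - ε) (b + ε), HasDerivAt (fun t => (α t).1) 1 t :=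
    fun t ht => (hα t ht).fst
  have hsnd : ∀ t ∈ Ioo (b - ε) (b + ε), HasDerivAt (fun t => (α t).2) (v (α t).1 (α t).2) t :=
    fun t ht => (hα t ht).snd
  have htime : EqOn (fun t => (α t).1) id (Ioo (b - ε) (b + ε)) :=
    isOpen_Ioo.eqOn_of_deriv_eq isPreconnected_Ioo
      (fun t ht => (hfst t ht).differentiableAt.differentiableWithinAt) differentiableOn_id
      (fun t ht => (hfst t ht).deriv.trans (deriv_id t).symm)
      (x := b) (by simpa using hε) (by simp [hα₀])
  refine ⟨ε, hε, fun t => (α t).2, congrArg Prod.snd hα₀, fun t ht => ?_⟩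
  have htime_t : (α t).1 = t := htime ht
  simpa only [htime_t] using hsnd t ht

theorem exists_hasDerivAt_extension (hab : a < b)
    (hv : ContDiffAt ℝ 1 (Function.uncurry v) (b, p))
    (hX : ∀ t ∈ Ioo a b, HasDerivAt X (v t (X t)) t) (hlim : Tendsto X (𝓝[<] b) (𝓝 p)) :
    ∃ ε > 0, ∃ Y : ℝ → E, EqOn Y X (Iio b) ∧
      ∀ t ∈ Ioo a (b + ε), HasDerivAt Y (v t (Y t)) t := by
  obtain ⟨ε, hε, Z, hZb, hZ⟩ := exists_hasDerivAt_of_contDiffAt_uncurry hv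
  refine ⟨ε, hε, fun t => if t < b then X t else Z t, fun t ht => if_pos ht, fun t ht => ?_⟩
  rcases lt_trichotomy t b with htb | rfl | hbt
  · simp only [if_pos htb]
    refine (hX t ⟨ht.1, htb⟩).congr_of_eventuallyEq ?_
    filter_upwards [Iio_mem_nhds htb] with s hs using if_pos hs
  · simp only [lt_irrefl, if_false]
    have hvlim : Tendsto (fun s => v s (X s)) (𝓝[<] t) (𝓝 (v t (Z t))) := by
      rw [hZb]
      exact hv.continuousAt.tendsto.comp
        ((tendsto_id.mono_left nhdsWithin_le_nhds).prodMk_nhds hlim)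
    exact hasDerivAt_ite_lt hab hX (hZ t ⟨by linarith, by linarith⟩) (hZb ▸ hlim) hvlim
  · simp only [if_neg hbt.not_gt]
    refine (hZ t ⟨by linarith, ht.2⟩).congr_of_eventuallyEq ?_
    filter_upwards [Ioi_mem_nhds hbt] with s hs using if_neg (not_lt.2 (le_of_lt hs))

end Extension

/-- The outward flux `r ∂ᵣ(Δu)` of the Laplacian of a planar radial function `u` with `∂ᵣu = g`: the
equation is its balance law `(r ∂ᵣ(Δu))' = g g' + r² g / 4`. -/
noncomputable def radialFlux (g g' g'' : ℝ → ℝ) (x : ℝ) : ℝ :=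
  x * g'' x + g' x - g x / x

theorem hasDerivAt_mul_mul_deriv_sub {g g' g'' : ℝ → ℝ} {x : ℝ} (hx : x ≠ 0)
    (hg : HasDerivAt g (g' x) x) (hg' : HasDerivAt g' (g'' x) x) :
    HasDerivAt (fun x => x * (x * g' x - g x)) (x * radialFlux g g' g'' x) x := by
  refine ((hasDerivAt_id' x).mul (((hasDerivAt_id' x).mul hg').sub hg)).congr_deriv ?_
  simp only [radialFlux, Pi.mul_apply, Pi.sub_apply]
  field_simp
  ring

/-- An energy of the equation, whose monotonicity bounds `(x g')²` from below. The weight `1 / 4`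
lets `(x g³ / 4)' = (g + 3 x g') g² / 4` be absorbed by `x g' g²` once `g ≤ x g'`. -/
noncomputable def energy (g g' : ℝ → ℝ) (x : ℝ) : ℝ :=
  (x * g' x) ^ 2 - g x ^ 2 - x * g x ^ 3 / 4

/-- The value of `g'''` at `t ≠ 0` prescribed by the equation when `p = (g, g', g'')`. -/
noncomputable def thirdDeriv (t : ℝ) (p : ℝ × ℝ × ℝ) : ℝ :=
  (t ^ 4 * p.1 + 4 * t * p.2.1 + 4 * t ^ 2 * p.1 * p.2.1 - 4 * p.1 - 8 * t ^ 2 * p.2.2)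
    / (4 * t ^ 3)

/-- The time-dependent vector field on the phase space of triples `(g, g', g'')` whose integral
curves are the solutions of the equation away from `t = 0`. -/
noncomputable def phaseField (t : ℝ) (p : ℝ × ℝ × ℝ) : ℝ × ℝ × ℝ :=
  (p.2.1, p.2.2, thirdDeriv t p)

theorem eq_thirdDeriv_iff {t x y z w : ℝ} (ht : t ≠ 0) :
    w = thirdDeriv t (x, y, z) ↔
      4 * x - t ^ 4 * x - 4 * t * y - 4 * t ^ 2 * x * y + 8 * t ^ 2 * z + 4 * t ^ 3 * w = 0 := by
  rw [thirdDeriv, eq_div_iff (by positivity)]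
  constructor <;> intro h <;> linarith

theorem contDiffAt_thirdDeriv {t : ℝ} (ht : t ≠ 0) (p : ℝ × ℝ × ℝ) :
    ContDiffAt ℝ 1 (Function.uncurry thirdDeriv) (t, p) := by
  unfold Function.uncurry thirdDeriv
  exact ContDiffAt.div (by fun_prop) (by fun_prop) (by positivity)

theorem contDiffAt_phaseField {t : ℝ} (ht : t ≠ 0) (p : ℝ × ℝ × ℝ) :
    ContDiffAt ℝ 1 (Function.uncurry phaseField) (t, p) :=
  ContDiffAt.prodMk (f := fun q : ℝ × ℝ × ℝ × ℝ => q.2.2.1) (by fun_prop) <|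
    ContDiffAt.prodMk (f := fun q : ℝ × ℝ × ℝ × ℝ => q.2.2.2) (by fun_prop)
      (contDiffAt_thirdDeriv ht p)

/-- A `C³` solution of the self-similar growth equation on `s`, given together with its first three
derivatives; derivatives are taken within `s`, hence one-sided at an endpoint belonging to `s`. -/
structure IsSolutionOn (g g' g'' g''' : ℝ → ℝ) (s : Set ℝ) : Prop where
  hasDerivWithinAt : ∀ η ∈ s, HasDerivWithinAt g (g' η) s η
  hasDerivWithinAt' : ∀ η ∈ s, HasDerivWithinAt g' (g'' η) s η
  hasDerivWithinAt'' : ∀ η ∈ s, HasDerivWithinAt g'' (g''' η) s η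
  continuousOn''' : ContinuousOn g''' s
  ode : ∀ η ∈ s, 4 * g η - η ^ 4 * g η - 4 * η * g' η - 4 * η ^ 2 * g η * g' η
    + 8 * η ^ 2 * g'' η + 4 * η ^ 3 * g''' η = 0

theorem isSolutionOn_of_hasDerivAt_phaseField {Y : ℝ → ℝ × ℝ × ℝ} {s : Set ℝ} (hs : ∀ t ∈ s, t ≠ 0)
    (hY : ∀ t ∈ s, HasDerivAt Y (phaseField t (Y t)) t) :
    IsSolutionOn (fun t => (Y t).1) (fun t => (Y t).2.1) (fun t => (Y t).2.2)
      (fun t => thirdDeriv t (Y t)) s where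
  hasDerivWithinAt t ht := (hY t ht).hasDerivWithinAt.fst
  hasDerivWithinAt' t ht := (hY t ht).hasDerivWithinAt.snd.fst
  hasDerivWithinAt'' t ht := (hY t ht).hasDerivWithinAt.snd.snd
  continuousOn''' t ht :=
    ((contDiffAt_thirdDeriv (hs t ht) (Y t)).continuousAt.comp (f := fun t => (t, Y t))
      (continuousAt_id.prodMk (hY t ht).continuousAt)).continuousWithinAt
  ode t ht := (eq_thirdDeriv_iff (hs t ht)).1 rfl

namespace IsSolutionOn

variable {g g' g'' g''' G G' G'' G''' : ℝ → ℝ} {s t : Set ℝ} {b x y : ℝ}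

theorem congr (h : IsSolutionOn g g' g'' g''' s) (e : EqOn G g s) (e' : EqOn G' g' s)
    (e'' : EqOn G'' g'' s) (e''' : EqOn G''' g''' s) : IsSolutionOn G G' G'' G''' s where
  hasDerivWithinAt η hη := e' hη ▸ (h.hasDerivWithinAt η hη).congr e (e hη)
  hasDerivWithinAt' η hη := e'' hη ▸ (h.hasDerivWithinAt' η hη).congr e' (e' hη)
  hasDerivWithinAt'' η hη := e''' hη ▸ (h.hasDerivWithinAt'' η hη).congr e'' (e'' hη)
  continuousOn''' := h.continuousOn'''.congr e'''
  ode η hη := by rw [e hη, e' hη, e'' hη, e''' hη, h.ode η hη]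

theorem of_forall_exists_mem_nhdsWithin
    (h : ∀ x ∈ s, ∃ t ∈ 𝓝[s] x, IsSolutionOn g g' g'' g''' t) : IsSolutionOn g g' g'' g''' s where
  hasDerivWithinAt η hη :=
    have ⟨_, ht, sol⟩ := h η hη
    (sol.hasDerivWithinAt η (mem_of_mem_nhdsWithin hη ht)).mono_of_mem_nhdsWithin ht
  hasDerivWithinAt' η hη :=
    have ⟨_, ht, sol⟩ := h η hη
    (sol.hasDerivWithinAt' η (mem_of_mem_nhdsWithin hη ht)).mono_of_mem_nhdsWithin ht
  hasDerivWithinAt'' η hη :=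
    have ⟨_, ht, sol⟩ := h η hη
    (sol.hasDerivWithinAt'' η (mem_of_mem_nhdsWithin hη ht)).mono_of_mem_nhdsWithin ht
  continuousOn''' η hη :=
    have ⟨_, ht, sol⟩ := h η hη
    (sol.continuousOn''' η (mem_of_mem_nhdsWithin hη ht)).mono_of_mem_nhdsWithin ht
  ode η hη :=
    have ⟨_, ht, sol⟩ := h η hη
    sol.ode η (mem_of_mem_nhdsWithin hη ht)

theorem mono (h : IsSolutionOn g g' g'' g''' s) (hts : t ⊆ s) : IsSolutionOn g g' g'' g''' t :=
  of_forall_exists_mem_nhdsWithin fun _ _ => ⟨s, mem_of_superset self_mem_nhdsWithin hts, h⟩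

theorem Ico_of_Ioo (h : IsSolutionOn g g' g'' g''' (Ico x b))
    (h' : IsSolutionOn g g' g'' g''' (Ioo x y)) (hxb : x < b) :
    IsSolutionOn g g' g'' g''' (Ico x y) := by
  refine of_forall_exists_mem_nhdsWithin fun t ht => ?_
  rcases ht.1.eq_or_lt with rfl | hxt
  · exact ⟨Ico x b, mem_nhdsWithin.2 ⟨Iio b, isOpen_Iio, hxb, fun _ hs => ⟨hs.2.1, hs.1⟩⟩, h⟩
  · exact ⟨_, mem_nhdsWithin_of_mem_nhds (Ioo_mem_nhds hxt ht.2), h'⟩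

theorem eq_thirdDeriv (h : IsSolutionOn g g' g'' g''' s) (hxs : x ∈ s) (hx : x ≠ 0) :
    g''' x = thirdDeriv x (g x, g' x, g'' x) :=
  (eq_thirdDeriv_iff hx).2 (h.ode x hxs)

theorem hasDerivAt (h : IsSolutionOn g g' g'' g''' s) (hs : s ∈ 𝓝 x) : HasDerivAt g (g' x) x :=
  (h.hasDerivWithinAt x (mem_of_mem_nhds hs)).hasDerivAt hs

theorem hasDerivAt' (h : IsSolutionOn g g' g'' g''' s) (hs : s ∈ 𝓝 x) : HasDerivAt g' (g'' x) x :=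
  (h.hasDerivWithinAt' x (mem_of_mem_nhds hs)).hasDerivAt hs

theorem hasDerivAt'' (h : IsSolutionOn g g' g'' g''' s) (hs : s ∈ 𝓝 x) :
    HasDerivAt g'' (g''' x) x :=
  (h.hasDerivWithinAt'' x (mem_of_mem_nhds hs)).hasDerivAt hs

theorem hasDerivAt_phaseField (h : IsSolutionOn g g' g'' g''' s) (hs : s ∈ 𝓝 x) (hx : x ≠ 0) :
    HasDerivAt (fun t => (g t, g' t, g'' t)) (phaseField x (g x, g' x, g'' x)) x := by
  rw [phaseField, ← h.eq_thirdDeriv (mem_of_mem_nhds hs) hx]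
  exact (h.hasDerivAt hs).prodMk ((h.hasDerivAt' hs).prodMk (h.hasDerivAt'' hs))

theorem hasDerivAt_radialFlux_sub (h : IsSolutionOn g g' g'' g''' s) (hs : s ∈ 𝓝 x) (hx : x ≠ 0) :
    HasDerivAt (fun x => radialFlux g g' g'' x - g x ^ 2 / 2) (x ^ 2 * g x / 4) x := by
  have hg := h.hasDerivAt hs
  refine (((((hasDerivAt_id' x).mul (h.hasDerivAt'' hs)).add (h.hasDerivAt' hs)).sub
    (hg.div (hasDerivAt_id' x) hx)).sub ((hg.pow 2).div_const 2)).congr_deriv ?_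
  rw [h.eq_thirdDeriv (mem_of_mem_nhds hs) hx, thirdDeriv]
  field_simp
  ring

theorem hasDerivAt_energy (h : IsSolutionOn g g' g'' g''' s) (hs : s ∈ 𝓝 x) (hx : x ≠ 0) :
    HasDerivAt (energy g g')
      (2 * (x * g' x) * (radialFlux g g' g'' x - g x ^ 2 / 2)
        + g x ^ 2 / 4 * (x * g' x - g x)) x := by
  have hg := h.hasDerivAt hs
  refine (((((hasDerivAt_id' x).mul (h.hasDerivAt' hs)).pow 2).sub (hg.pow 2)).sub
    (((hasDerivAt_id' x).mul (hg.pow 3)).div_const 4)).congr_deriv ?_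
  simp only [radialFlux, Pi.mul_apply, Pi.pow_apply]
  field_simp
  ring

section Origin

variable (h : IsSolutionOn g g' g'' g''' (Ico 0 b)) (hb : 0 < b)
include h hb

theorem tendsto_nhdsGT_zero : Tendsto g (𝓝[>] 0) (𝓝 (g 0)) :=
  ((h.hasDerivWithinAt 0 ⟨le_rfl, hb⟩).continuousWithinAt.tendsto).mono_left
    (nhdsWithin_le_of_mem (Ico_mem_nhdsGT hb))

theorem tendsto_nhdsGT_zero' : Tendsto g' (𝓝[>] 0) (𝓝 (g' 0)) :=
  ((h.hasDerivWithinAt' 0 ⟨le_rfl, hb⟩).continuousWithinAt.tendsto).mono_left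
    (nhdsWithin_le_of_mem (Ico_mem_nhdsGT hb))

theorem tendsto_nhdsGT_zero'' : Tendsto g'' (𝓝[>] 0) (𝓝 (g'' 0)) :=
  ((h.hasDerivWithinAt'' 0 ⟨le_rfl, hb⟩).continuousWithinAt.tendsto).mono_left
    (nhdsWithin_le_of_mem (Ico_mem_nhdsGT hb))

theorem tendsto_div_nhdsGT_zero (h0 : g 0 = 0) :
    Tendsto (fun x => g x / x) (𝓝[>] 0) (𝓝 (g' 0)) := by
  have hderiv : HasDerivWithinAt g (g' 0) (Ioi 0) 0 :=
    (h.hasDerivWithinAt 0 ⟨le_rfl, hb⟩).mono_of_mem_nhdsWithin (Ico_mem_nhdsGT hb)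
  refine ((hasDerivWithinAt_iff_tendsto_slope' (lt_irrefl 0)).1 hderiv).congr fun x => ?_
  rw [slope_def_field, h0, sub_zero, sub_zero]

theorem tendsto_radialFlux_sub_nhdsGT_zero (h0 : g 0 = 0) :
    Tendsto (fun x => radialFlux g g' g'' x - g x ^ 2 / 2) (𝓝[>] 0) (𝓝 0) := by
  have hid : Tendsto (fun x : ℝ => x) (𝓝[>] 0) (𝓝 0) := tendsto_id.mono_left nhdsWithin_le_nhds
  have hlim := (((hid.mul (h.tendsto_nhdsGT_zero'' hb)).add (h.tendsto_nhdsGT_zero' hb)).sub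
    (h.tendsto_div_nhdsGT_zero hb h0)).sub (((h.tendsto_nhdsGT_zero hb).pow 2).div_const 2)
  simpa [radialFlux, h0] using hlim

theorem tendsto_mul_mul_deriv_sub_nhdsGT_zero :
    Tendsto (fun x => x * (x * g' x - g x)) (𝓝[>] 0) (𝓝 0) := by
  have hid : Tendsto (fun x : ℝ => x) (𝓝[>] 0) (𝓝 0) := tendsto_id.mono_left nhdsWithin_le_nhds
  simpa using hid.mul ((hid.mul (h.tendsto_nhdsGT_zero' hb)).sub (h.tendsto_nhdsGT_zero hb))

theorem tendsto_energy_nhdsGT_zero (h0 : g 0 = 0) :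
    Tendsto (energy g g') (𝓝[>] 0) (𝓝 0) := by
  have hid : Tendsto (fun x : ℝ => x) (𝓝[>] 0) (𝓝 0) := tendsto_id.mono_left nhdsWithin_le_nhds
  have hg := h.tendsto_nhdsGT_zero hb
  have hlim := (((hid.mul (h.tendsto_nhdsGT_zero' hb)).pow 2).sub (hg.pow 2)).sub
    ((hid.mul (hg.pow 3)).div_const 4)
  unfold energy
  simpa [h0] using hlim

end Origin

section Positivity

variable (h : IsSolutionOn g g' g'' g''' (Ico 0 b)) (h0 : g 0 = 0)
include h h0

theorem sq_div_two_le_radialFlux (hx : x ∈ Ioo 0 b) (hg : ∀ y ∈ Ioo 0 x, 0 ≤ g y) :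
    g x ^ 2 / 2 ≤ radialFlux g g' g'' x := by
  refine sub_nonneg.1 (le_of_tendsto_nhdsGT_of_deriv_nonneg
    (f := fun x => radialFlux g g' g'' x - g x ^ 2 / 2) hx.1 (fun y hy =>
      h.hasDerivAt_radialFlux_sub (Ico_mem_nhds hy.1 (hy.2.trans_lt hx.2)) hy.1.ne')
    (fun y hy => ?_) (h.tendsto_radialFlux_sub_nhdsGT_zero (hx.1.trans hx.2) h0))
  have hgy := hg y hy
  positivity

theorem le_mul_deriv (hx : x ∈ Ioo 0 b) (hg : ∀ y ∈ Ioo 0 x, 0 ≤ g y) : g x ≤ x * g' x := by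
  have hK : 0 ≤ x * (x * g' x - g x) := by
    refine le_of_tendsto_nhdsGT_of_deriv_nonneg (f := fun x => x * (x * g' x - g x))
      (f' := fun x => x * radialFlux g g' g'' x) hx.1
      (fun y hy => ?_) (fun y hy => ?_) (h.tendsto_mul_mul_deriv_sub_nhdsGT_zero (hx.1.trans hx.2))
    · have hmem : Ico 0 b ∈ 𝓝 y := Ico_mem_nhds hy.1 (hy.2.trans_lt hx.2)
      exact hasDerivAt_mul_mul_deriv_sub hy.1.ne' (h.hasDerivAt hmem) (h.hasDerivAt' hmem)
    · have hflux := h.sq_div_two_le_radialFlux h0 ⟨hy.1, hy.2.trans hx.2⟩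
        fun z hz => hg z ⟨hz.1, hz.2.trans hy.2⟩
      exact mul_nonneg hy.1.le ((by positivity : 0 ≤ g y ^ 2 / 2).trans hflux)
  exact sub_nonneg.1 (nonneg_of_mul_nonneg_right hK hx.1)

theorem pos_of_forall_deriv_pos (hx : x ∈ Ioo 0 b) (hg' : ∀ y ∈ Ioo 0 x, 0 < g' y) : 0 < g x := by
  have hmono : StrictMonoOn g (Icc 0 x) :=
    strictMonoOn_of_hasDerivWithinAt_pos (convex_Icc 0 x)
      (fun y hy => ((h.hasDerivWithinAt y ⟨hy.1, hy.2.trans_lt hx.2⟩).continuousWithinAt).mono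
        (Icc_subset_Ico_right hx.2))
      (fun y hy => by
        rw [interior_Icc] at hy ⊢
        exact (h.hasDerivAt (Ico_mem_nhds hy.1 (hy.2.trans hx.2))).hasDerivWithinAt)
      (fun y hy => hg' y (interior_Icc (a := (0 : ℝ)) ▸ hy))
  simpa only [h0] using hmono ⟨le_rfl, hx.1.le⟩ ⟨hx.1.le, le_rfl⟩ hx.1

variable (h1 : 0 < g' 0)
include h1

theorem deriv_pos (hx : x ∈ Ico 0 b) : 0 < g' x := by
  have hsub : Icc 0 x ⊆ Ico 0 b := Icc_subset_Ico_right hx.2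
  refine forall_mem_Icc_pos_of_forall_Ico
    (fun y hy => ((h.hasDerivWithinAt' y (hsub hy)).continuousWithinAt).mono hsub)
    (fun c hc hpos => ?_) x ⟨hx.1, le_rfl⟩
  rcases hc.1.eq_or_lt with rfl | hc0
  · exact h1
  have hgpos : ∀ y ∈ Ioc 0 c, 0 < g y := fun y hy =>
    h.pos_of_forall_deriv_pos h0 ⟨hy.1, (hy.2.trans hc.2).trans_lt hx.2⟩
      fun z hz => hpos z ⟨hz.1.le, hz.2.trans_le hy.2⟩
  have hle : g c ≤ c * g' c :=
    h.le_mul_deriv h0 ⟨hc0, hc.2.trans_lt hx.2⟩ fun y hy => (hgpos y ⟨hy.1, hy.2.le⟩).le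
  exact pos_of_mul_pos_right ((hgpos c ⟨hc0, le_rfl⟩).trans_le hle) hc0.le

theorem pos (hx : x ∈ Ioo 0 b) : 0 < g x :=
  h.pos_of_forall_deriv_pos h0 hx fun _ hy => h.deriv_pos h0 h1 ⟨hy.1.le, hy.2.trans hx.2⟩

theorem monotoneOn : MonotoneOn g (Ioo 0 b) :=
  monotoneOn_of_hasDerivWithinAt_nonneg (convex_Ioo 0 b)
    (fun _ hx => (h.hasDerivAt (Ico_mem_nhds hx.1 hx.2)).continuousAt.continuousWithinAt)
    (fun x hx => by
      rw [interior_Ioo] at hx ⊢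
      exact (h.hasDerivAt (Ico_mem_nhds hx.1 hx.2)).hasDerivWithinAt)
    (fun _ hx => (h.deriv_pos h0 h1 (Ioo_subset_Ico_self (interior_subset hx))).le)

theorem mul_cube_div_four_le_sq (hx : x ∈ Ioo 0 b) : x * g x ^ 3 / 4 ≤ (x * g' x) ^ 2 := by
  have henergy : 0 ≤ energy g g' x := by
    refine le_of_tendsto_nhdsGT_of_deriv_nonneg hx.1 (fun y hy =>
        h.hasDerivAt_energy (Ico_mem_nhds hy.1 (hy.2.trans_lt hx.2)) hy.1.ne')
      (fun y hy => ?_) (h.tendsto_energy_nhdsGT_zero (hx.1.trans hx.2) h0)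
    have hy' : y ∈ Ioo 0 b := ⟨hy.1, hy.2.trans hx.2⟩
    have hg : ∀ z ∈ Ioo 0 y, 0 ≤ g z := fun z hz => (h.pos h0 h1 ⟨hz.1, hz.2.trans hy'.2⟩).le
    have hg'y := h.deriv_pos h0 h1 (Ioo_subset_Ico_self hy')
    have hflux := sub_nonneg.2 (h.sq_div_two_le_radialFlux h0 hy' hg)
    have hslope := sub_nonneg.2 (h.le_mul_deriv h0 hy' hg)
    have hy0 := hy.1
    positivity
  rw [energy] at henergy
  linarith [sq_nonneg (g x)]

theorem sqrt_cube_le (hx : x ∈ Ioo 0 b) : √(g x) ^ 3 ≤ 2 * √x * g' x := by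
  have hg := h.pos h0 h1 hx
  have hg' := h.deriv_pos h0 h1 (Ioo_subset_Ico_self hx)
  have hx0 := hx.1
  refine (pow_le_pow_iff_left₀ (by positivity) (by positivity) two_ne_zero).1 ?_
  rw [pow_right_comm, mul_pow, mul_pow, Real.sq_sqrt hg.le, Real.sq_sqrt hx0.le]
  refine le_of_mul_le_mul_left ?_ hx0
  linarith [h.mul_cube_div_four_le_sq h0 h1 hx]

theorem antitoneOn_inv_sqrt_add : AntitoneOn (fun x => (√(g x))⁻¹ + √x / 2) (Ioo 0 b) := by
  have hderiv : ∀ x ∈ Ioo 0 b, HasDerivAt (fun x => (√(g x))⁻¹ + √x / 2)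
      (-(g' x / (2 * √(g x))) / √(g x) ^ 2 + 1 / (2 * √x) / 2) x := fun x hx => by
    have hg := h.pos h0 h1 hx
    exact (((h.hasDerivAt (Ico_mem_nhds hx.1 hx.2)).sqrt hg.ne').fun_inv
      (Real.sqrt_pos.2 hg).ne').add ((Real.hasDerivAt_sqrt hx.1.ne').div_const 2)
  refine antitoneOn_of_hasDerivWithinAt_nonpos (convex_Ioo 0 b)
    (fun x hx => (hderiv x hx).continuousAt.continuousWithinAt)
    (fun x hx => (hderiv x (interior_subset hx)).hasDerivWithinAt) (fun x hx => ?_)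
  have hx' := interior_subset hx
  have hg : 0 < √(g x) := Real.sqrt_pos.2 (h.pos h0 h1 hx')
  have hsqrt : 0 < √x := Real.sqrt_pos.2 hx'.1
  have hle : 1 / (2 * √x) / 2 ≤ g' x / (2 * √(g x)) / √(g x) ^ 2 := by
    rw [div_div, div_div, div_le_div_iff₀ (by positivity) (by positivity)]
    linarith [h.sqrt_cube_le h0 h1 hx']
  rw [neg_div]
  linarith

theorem sqrt_lt (hx : x ∈ Ioo 0 b) (hy : y ∈ Ioo 0 b) (hxy : x ≤ y) :
    √y < √x + 2 / √(g x) := by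
  have hanti : (√(g y))⁻¹ + √y / 2 ≤ (√(g x))⁻¹ + √x / 2 :=
    h.antitoneOn_inv_sqrt_add h0 h1 hx hy hxy
  have hgy : 0 < (√(g y))⁻¹ := inv_pos.2 (Real.sqrt_pos.2 (h.pos h0 h1 hy))
  rw [div_eq_mul_inv]
  linarith

end Positivity

theorem not_Ici (h0 : g 0 = 0) (h1 : 0 < g' 0) : ¬ IsSolutionOn g g' g'' g''' (Ici 0) := by
  intro h
  set r := √1 + 2 / √(g 1) with hr
  have hr1 : 1 ≤ r := by rw [hr, Real.sqrt_one]; linarith [show 0 ≤ 2 / √(g 1) by positivity]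
  have hlt : r < r ^ 2 + 1 := by nlinarith
  have hsqrt : √(r ^ 2) < r :=
    (h.mono (Ico_subset_Ici_self : Ico 0 (r ^ 2 + 1) ⊆ Ici 0)).sqrt_lt h0 h1 (x := 1)
      (y := r ^ 2) ⟨one_pos, by linarith⟩ ⟨by positivity, by linarith⟩ (by nlinarith)
  rw [Real.sqrt_sq (by linarith)] at hsqrt
  exact hsqrt.false

section Continuation

variable (h : IsSolutionOn g g' g'' g''' (Ico 0 b)) (hb : 0 < b)
include h hb

theorem exists_tendsto_deriv {p : ℝ} (hp : Tendsto g (𝓝[<] b) (𝓝 p)) :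
    ∃ q r, Tendsto g' (𝓝[<] b) (𝓝 q) ∧ Tendsto g'' (𝓝[<] b) (𝓝 r) := by
  have hid : Tendsto (fun x : ℝ => x) (𝓝[<] b) (𝓝 b) := tendsto_id.mono_left nhdsWithin_le_nhds
  have hIoo : ∀ᶠ x in 𝓝[<] b, x ∈ Ioo 0 b := Ioo_mem_nhdsLT hb
  have hne : ∀ᶠ x in 𝓝[<] b, x ≠ 0 := hIoo.mono fun x hx => hx.1.ne'
  have hmem : ∀ᶠ x in 𝓝[<] b, Ico 0 b ∈ 𝓝 x := hIoo.mono fun x hx => Ico_mem_nhds hx.1 hx.2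
  obtain ⟨l, hl⟩ := exists_tendsto_nhdsLT_of_tendsto_deriv
    (by filter_upwards [hmem, hne] with x hx hx0 using h.hasDerivAt_radialFlux_sub hx hx0)
    (((hid.pow 2).mul hp).div_const 4)
  have hflux : Tendsto (radialFlux g g' g'') (𝓝[<] b) (𝓝 (l + p ^ 2 / 2)) :=
    (hl.add ((hp.pow 2).div_const 2)).congr fun x => sub_add_cancel _ _
  obtain ⟨k, hk⟩ := exists_tendsto_nhdsLT_of_tendsto_deriv
    (by filter_upwards [hmem, hne] with x hx hx0 using
      hasDerivAt_mul_mul_deriv_sub hx0 (h.hasDerivAt hx) (h.hasDerivAt' hx))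
    (hid.mul hflux)
  have hq : Tendsto g' (𝓝[<] b) (𝓝 ((k / b + p) / b)) := by
    refine (((hk.div hid hb.ne').add hp).div hid hb.ne').congr' ?_
    filter_upwards [hne] with x hx
    simp only [Pi.div_apply]
    field_simp
    ring
  refine ⟨_, (l + p ^ 2 / 2 - (k / b + p) / b + p / b) / b, hq, ?_⟩
  refine (((hflux.sub hq).add (hp.div hid hb.ne')).div hid hb.ne').congr' ?_
  filter_upwards [hne] with x hx
  simp only [Pi.div_apply, radialFlux]
  field_simp
  ring

theorem exists_extension {p : ℝ} (hp : Tendsto g (𝓝[<] b) (𝓝 p)) :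
    ∃ c > b, ∃ G G' G'' G''' : ℝ → ℝ, IsSolutionOn G G' G'' G''' (Ico 0 c) ∧
      EqOn G g (Ico 0 b) := by
  obtain ⟨q, r, hq, hr⟩ := h.exists_tendsto_deriv hb hp
  obtain ⟨ε, hε, Y, hYg, hY⟩ := exists_hasDerivAt_extension hb
    (contDiffAt_phaseField hb.ne' (p, q, r))
    (fun t ht => h.hasDerivAt_phaseField (Ico_mem_nhds ht.1 ht.2) ht.1.ne')
    (hp.prodMk_nhds (hq.prodMk_nhds hr))
  -- `thirdDeriv` is a junk value at `0`, so the old third derivative is kept before `b`.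
  let G''' : ℝ → ℝ := fun t => if t < b then g''' t else thirdDeriv t (Y t)
  have hG''' : EqOn G''' (fun t => thirdDeriv t (Y t)) (Ioo 0 (b + ε)) := by
    intro t ht
    by_cases htb : t < b
    · simp only [G''', if_pos htb, h.eq_thirdDeriv ⟨ht.1.le, htb⟩ ht.1.ne', hYg htb]
    · exact if_neg htb
  have hold : IsSolutionOn (fun t => (Y t).1) (fun t => (Y t).2.1) (fun t => (Y t).2.2) G'''
      (Ico 0 b) :=
    h.congr (fun t ht => by simp only [hYg ht.2]) (fun t ht => by simp only [hYg ht.2])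
      (fun t ht => by simp only [hYg ht.2]) (fun t ht => if_pos ht.2)
  have hnew : IsSolutionOn (fun t => (Y t).1) (fun t => (Y t).2.1) (fun t => (Y t).2.2) G'''
      (Ioo 0 (b + ε)) :=
    (isSolutionOn_of_hasDerivAt_phaseField (fun t ht => ht.1.ne') hY).congr
      (fun _ _ => rfl) (fun _ _ => rfl) (fun _ _ => rfl) hG'''
  exact ⟨b + ε, lt_add_of_pos_right b hε, _, _, _, _, hold.Ico_of_Ioo hnew hb,
    fun t ht => congrArg Prod.fst (hYg ht.2)⟩

end Continuation

end IsSolutionOn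

theorem setOf_nonneg_and_coe_lt_coe (b : ℝ) :
    {x : ℝ | 0 ≤ x ∧ (x : EReal) < (b : EReal)} = Ico 0 b := by
  simp only [EReal.coe_lt_coe_iff, Ico_def]

theorem setOf_nonneg_and_coe_lt_top : {x : ℝ | 0 ≤ x ∧ (x : EReal) < ⊤} = Ici 0 := by
  simp only [EReal.coe_lt_top, and_true, Ici_def]

/-- Proposition 3.1: Let `η̄ ∈ (0, ∞]` and let `g : [0, η̄) → ℝ` be a `C³`
solution of the ODE with `g(0) = 0`, `g''(0) = 0`, `g'(0) > 0`, which cannot be extended to a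
`C³` solution of the same ODE on any strictly larger interval `[0, η̄')` with `η̄' > η̄`.
Then `η̄ < ∞`, `g'(η) > 0` on `(0, η̄)`, and `g(η) → +∞` as `η → η̄⁻`. -/
theorem stmt6 (ηbar : EReal) (hηbar : 0 < ηbar)
    (g g' g'' g''' : ℝ → ℝ)
    (hg : ∀ η ∈ {x : ℝ | 0 ≤ x ∧ (x : EReal) < ηbar},
      HasDerivWithinAt g (g' η) {x : ℝ | 0 ≤ x ∧ (x : EReal) < ηbar} η)
    (hg' : ∀ η ∈ {x : ℝ | 0 ≤ x ∧ (x : EReal) < ηbar},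
      HasDerivWithinAt g' (g'' η) {x : ℝ | 0 ≤ x ∧ (x : EReal) < ηbar} η)
    (hg'' : ∀ η ∈ {x : ℝ | 0 ≤ x ∧ (x : EReal) < ηbar},
      HasDerivWithinAt g'' (g''' η) {x : ℝ | 0 ≤ x ∧ (x : EReal) < ηbar} η)
    (hg''' : ContinuousOn g''' {x : ℝ | 0 ≤ x ∧ (x : EReal) < ηbar})
    (hode : ∀ η ∈ {x : ℝ | 0 ≤ x ∧ (x : EReal) < ηbar},
      4 * g η - η ^ 4 * g η - 4 * η * g' η - 4 * η ^ 2 * g η * g' η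
        + 8 * η ^ 2 * g'' η + 4 * η ^ 3 * g''' η = 0)
    (h0 : g 0 = 0) (h2 : g'' 0 = 0) (h1 : 0 < g' 0)
    (hmax : ¬ ∃ (ηbar' : EReal) (G G' G'' G''' : ℝ → ℝ), ηbar < ηbar' ∧
      (∀ η ∈ {x : ℝ | 0 ≤ x ∧ (x : EReal) < ηbar'},
        HasDerivWithinAt G (G' η) {x : ℝ | 0 ≤ x ∧ (x : EReal) < ηbar'} η) ∧
      (∀ η ∈ {x : ℝ | 0 ≤ x ∧ (x : EReal) < ηbar'},
        HasDerivWithinAt G' (G'' η) {x : ℝ | 0 ≤ x ∧ (x : EReal) < ηbar'} η) ∧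
      (∀ η ∈ {x : ℝ | 0 ≤ x ∧ (x : EReal) < ηbar'},
        HasDerivWithinAt G'' (G''' η) {x : ℝ | 0 ≤ x ∧ (x : EReal) < ηbar'} η) ∧
      ContinuousOn G''' {x : ℝ | 0 ≤ x ∧ (x : EReal) < ηbar'} ∧
      (∀ η ∈ {x : ℝ | 0 ≤ x ∧ (x : EReal) < ηbar'},
        4 * G η - η ^ 4 * G η - 4 * η * G' η - 4 * η ^ 2 * G η * G' η
          + 8 * η ^ 2 * G'' η + 4 * η ^ 3 * G''' η = 0) ∧
      Set.EqOn G g {x : ℝ | 0 ≤ x ∧ (x : EReal) < ηbar}) :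
    ∃ b : ℝ, ηbar = (b : EReal) ∧ (∀ η : ℝ, 0 < η → η < b → 0 < g' η) ∧
      Tendsto g (nhdsWithin b (Set.Iio b)) atTop := by
  have hsol : IsSolutionOn g g' g'' g''' {x : ℝ | 0 ≤ x ∧ (x : EReal) < ηbar} :=
    ⟨hg, hg', hg'', hg''', hode⟩
  clear hg hg' hg'' hg''' hode
  induction ηbar using EReal.rec with
  | bot => exact absurd hηbar not_lt_bot
  | top =>
    rw [setOf_nonneg_and_coe_lt_top] at hsol
    exact absurd hsol (IsSolutionOn.not_Ici h0 h1)
  | coe b =>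
    simp only [setOf_nonneg_and_coe_lt_coe] at hsol hmax
    have hb : 0 < b := EReal.coe_pos.1 hηbar
    refine ⟨b, rfl, fun η h h' => hsol.deriv_pos h0 h1 ⟨h.le, h'⟩, ?_⟩
    refine (tendsto_nhdsLT_atTop_or_exists_nhds_of_monotoneOn hb
      (hsol.monotoneOn h0 h1)).resolve_right fun ⟨p, hp⟩ => hmax ?_
    obtain ⟨c, hbc, G, G', G'', G''', hG, hGg⟩ := hsol.exists_extension hb hp
    rw [← setOf_nonneg_and_coe_lt_coe] at hG
    exact ⟨c, G, G', G'', G''', EReal.coe_lt_coe_iff.2 hbc, hG.hasDerivWithinAt,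
      hG.hasDerivWithinAt', hG.hasDerivWithinAt'', hG.continuousOn''', hG.ode, hGg⟩
end

section
/- Let ε > 0 and let g : [0, ε) → ℝ be three times continuously differentiable, satisfy the ODE 4g(η) − η⁴g(η) − 4ηg'(η) − 4η²g(η)g'(η) + 8η²g''(η) + 4η³g'''(η) = 0 on [0, ε), with g(0) = 0 and g''(0) = 0. Then g'''(0) = (3/8)·g'(0)². -/
/-!
The residual of the equation along a `C³` profile has an asymptotic expansion at `0⁺`. Its constant
term is `4 g(0)`; once that vanishes, its `η²` coefficient is `6 g''(0)`; once that vanishes too,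
its `η³` coefficient is `(32/3) g'''(0) - 4 g'(0)²`. The only delicate term is `g - η g'`, whose
derivative is `-η g''`, so that L'Hôpital's rule determines its order at `0⁺`.
-/

open Set Filter Topology

section OneSidedDerivatives

variable {f f' f'' : ℝ → ℝ} {a c : ℝ}

theorem eventually_nhdsGE_hasDerivWithinAt_Ici {b : ℝ} (hab : a < b)
    (hf : ∀ x ∈ Ico a b, HasDerivWithinAt f (f' x) (Ico a b) x) :
    ∀ᶠ x in 𝓝[≥] a, HasDerivWithinAt f (f' x) (Ici a) x := by
  filter_upwards [Ico_mem_nhdsGE hab] with x hx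
  refine (hf x hx).mono_of_mem_nhdsWithin ?_
  rw [← Ici_inter_Iio]
  exact inter_mem_nhdsWithin _ (Iio_mem_nhds hx.2)

theorem eventually_nhdsGT_hasDerivAt
    (hf : ∀ᶠ x in 𝓝[≥] a, HasDerivWithinAt f (f' x) (Ici a) x) :
    ∀ᶠ x in 𝓝[>] a, HasDerivAt f (f' x) x := by
  filter_upwards [hf.filter_mono (nhdsWithin_mono a Ioi_subset_Ici_self), self_mem_nhdsWithin]
    with x hx hax
  exact hx.hasDerivAt (Ici_mem_nhds hax)

theorem continuousWithinAt_Ioi_of_eventually_hasDerivWithinAt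
    (hf : ∀ᶠ x in 𝓝[≥] a, HasDerivWithinAt f (f' x) (Ici a) x) :
    ContinuousWithinAt f (Ioi a) a :=
  (hf.self_of_nhdsWithin self_mem_Ici).continuousWithinAt.mono Ioi_subset_Ici_self

theorem tendsto_div_pow_succ_of_tendsto_deriv_div_pow {n : ℕ}
    (hf : ∀ᶠ x in 𝓝[>] a, HasDerivAt f (f' x) x) (hfa : Tendsto f (𝓝[>] a) (𝓝 0))
    (hc : Tendsto (fun x ↦ f' x / (x - a) ^ n) (𝓝[>] a) (𝓝 c)) :
    Tendsto (fun x ↦ f x / (x - a) ^ (n + 1)) (𝓝[>] a) (𝓝 (c / (n + 1))) := by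
  have hpow (x : ℝ) : HasDerivAt (fun y ↦ (y - a) ^ (n + 1)) ((n + 1) * (x - a) ^ n) x := by
    simpa using ((hasDerivAt_id x).sub_const a).fun_pow (n + 1)
  refine HasDerivAt.lhopital_zero_nhdsGT hf (Eventually.of_forall hpow) ?_ hfa ?_ ?_
  · filter_upwards [self_mem_nhdsWithin] with x hx
    have : 0 < x - a := sub_pos.2 hx
    positivity
  · simpa using (hpow a).continuousAt.tendsto.mono_left (nhdsWithin_le_nhds (s := Ioi a))
  · refine (hc.div_const (n + 1 : ℝ)).congr fun x ↦ ?_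
    rw [div_div, mul_comm]

theorem tendsto_sub_sub_mul_deriv_div_pow {n : ℕ}
    (hf : ∀ᶠ x in 𝓝[≥] a, HasDerivWithinAt f (f' x) (Ici a) x)
    (hf' : ∀ᶠ x in 𝓝[≥] a, HasDerivWithinAt f' (f'' x) (Ici a) x)
    (hc : Tendsto (fun x ↦ f'' x / (x - a) ^ n) (𝓝[>] a) (𝓝 c)) :
    Tendsto (fun x ↦ (f x - f a - (x - a) * f' x) / (x - a) ^ (n + 2)) (𝓝[>] a)
      (𝓝 (-c / (n + 2))) := by
  have hderiv : ∀ᶠ x in 𝓝[>] a,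
      HasDerivAt (fun y ↦ f y - f a - (y - a) * f' y) (-((x - a) * f'' x)) x := by
    filter_upwards [eventually_nhdsGT_hasDerivAt hf, eventually_nhdsGT_hasDerivAt hf']
      with x hx hx'
    refine ((hx.sub_const (f a)).sub (((hasDerivAt_id x).sub_const a).mul hx')).congr_deriv ?_
    simp
  have hzero : Tendsto (fun x ↦ f x - f a - (x - a) * f' x) (𝓝[>] a) (𝓝 0) := by
    have hcont := ((continuousWithinAt_Ioi_of_eventually_hasDerivWithinAt hf).sub_const (f a)).sub
      ((continuousWithinAt_id.sub_const a).mul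
        (continuousWithinAt_Ioi_of_eventually_hasDerivWithinAt hf'))
    simpa [ContinuousWithinAt] using hcont
  have hquot : Tendsto (fun x ↦ -((x - a) * f'' x) / (x - a) ^ (n + 1)) (𝓝[>] a) (𝓝 (-c)) := by
    refine hc.neg.congr' ?_
    filter_upwards [self_mem_nhdsWithin] with x hx
    have : x - a ≠ 0 := (sub_pos.2 hx).ne'
    field_simp
    ring
  convert tendsto_div_pow_succ_of_tendsto_deriv_div_pow hderiv hzero hquot using 3
  push_cast
  ring

theorem tendsto_div_nhdsGT_zero_of_hasDerivWithinAt {m : ℝ} (hf : HasDerivWithinAt f m (Ioi 0) 0)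
    (hf0 : f 0 = 0) : Tendsto (fun x ↦ f x / x) (𝓝[>] 0) (𝓝 m) := by
  simpa [slope_fun_def_field, hf0] using (hasDerivWithinAt_iff_tendsto_slope' self_notMem_Ioi).1 hf

end OneSidedDerivatives

/-- The left-hand side of the self-similar profile equation of epitaxial growth. The three
derivatives of the profile `g` are separate arguments, so that one-sided derivatives are allowed
at `0`. -/
def profileResidual (g g' g'' g''' : ℝ → ℝ) (η : ℝ) : ℝ :=
  4 * g η - η ^ 4 * g η - 4 * η * g' η - 4 * η ^ 2 * g η * g' η
    + 8 * η ^ 2 * g'' η + 4 * η ^ 3 * g''' η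

namespace profileResidual

variable {g g' g'' g''' : ℝ → ℝ}

theorem tendsto_nhdsGT_zero (hg : ContinuousWithinAt g (Ioi 0) 0)
    (hg' : ContinuousWithinAt g' (Ioi 0) 0) (hg'' : ContinuousWithinAt g'' (Ioi 0) 0)
    (hg''' : ContinuousWithinAt g''' (Ioi 0) 0) :
    Tendsto (profileResidual g g' g'' g''') (𝓝[>] 0) (𝓝 (4 * g 0)) := by
  have hcont : ContinuousWithinAt (profileResidual g g' g'' g''') (Ioi 0) 0 := by
    unfold profileResidual
    fun_prop
  simpa [ContinuousWithinAt, profileResidual] using hcont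

theorem tendsto_div_sq (hg : ∀ᶠ x in 𝓝[≥] 0, HasDerivWithinAt g (g' x) (Ici 0) x)
    (hg' : ∀ᶠ x in 𝓝[≥] 0, HasDerivWithinAt g' (g'' x) (Ici 0) x)
    (hg'' : ContinuousWithinAt g'' (Ioi 0) 0) (hg''' : ContinuousWithinAt g''' (Ioi 0) 0)
    (h0 : g 0 = 0) :
    Tendsto (fun η ↦ profileResidual g g' g'' g''' η / η ^ 2) (𝓝[>] 0) (𝓝 (6 * g'' 0)) := by
  have hlin : Tendsto (fun η ↦ (g η - η * g' η) / η ^ 2) (𝓝[>] 0) (𝓝 (-g'' 0 / 2)) := by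
    simpa [h0] using tendsto_sub_sub_mul_deriv_div_pow (n := 0) hg hg' (by simpa using hg''.tendsto)
  have hgc := continuousWithinAt_Ioi_of_eventually_hasDerivWithinAt hg
  have hgc' := continuousWithinAt_Ioi_of_eventually_hasDerivWithinAt hg'
  have hrest : ContinuousWithinAt
      (fun η ↦ 8 * g'' η - η ^ 2 * g η - 4 * g η * g' η + 4 * η * g''' η) (Ioi 0) 0 := by
    fun_prop
  have hlim := (hlin.const_mul 4).add hrest.tendsto
  have hval : 4 * (-g'' 0 / 2) + (8 * g'' 0 - 0 ^ 2 * g 0 - 4 * g 0 * g' 0 + 4 * 0 * g''' 0)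
      = 6 * g'' 0 := by
    rw [h0]
    ring
  rw [hval] at hlim
  refine hlim.congr' ?_
  filter_upwards [self_mem_nhdsWithin] with η hη
  have : η ≠ 0 := ne_of_gt hη
  rw [profileResidual]
  field_simp
  ring

theorem tendsto_div_cube (hg : ∀ᶠ x in 𝓝[≥] 0, HasDerivWithinAt g (g' x) (Ici 0) x)
    (hg' : ∀ᶠ x in 𝓝[≥] 0, HasDerivWithinAt g' (g'' x) (Ici 0) x)
    (hg'' : HasDerivWithinAt g'' (g''' 0) (Ioi 0) 0) (hg''' : ContinuousWithinAt g''' (Ioi 0) 0)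
    (h0 : g 0 = 0) (h2 : g'' 0 = 0) :
    Tendsto (fun η ↦ profileResidual g g' g'' g''' η / η ^ 3) (𝓝[>] 0)
      (𝓝 (32 / 3 * g''' 0 - 4 * g' 0 ^ 2)) := by
  have hquot : Tendsto (fun η ↦ g η / η) (𝓝[>] 0) (𝓝 (g' 0)) :=
    tendsto_div_nhdsGT_zero_of_hasDerivWithinAt
      ((hg.self_of_nhdsWithin self_mem_Ici).mono Ioi_subset_Ici_self) h0
  have hquot'' : Tendsto (fun η ↦ g'' η / η) (𝓝[>] 0) (𝓝 (g''' 0)) :=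
    tendsto_div_nhdsGT_zero_of_hasDerivWithinAt hg'' h2
  have hlin : Tendsto (fun η ↦ (g η - η * g' η) / η ^ 3) (𝓝[>] 0) (𝓝 (-g''' 0 / 3)) := by
    convert tendsto_sub_sub_mul_deriv_div_pow (n := 1) hg hg' (by simpa using hquot'') using 2
    · simp [h0]
    · norm_num
  have hgc := continuousWithinAt_Ioi_of_eventually_hasDerivWithinAt hg
  have hgc' := continuousWithinAt_Ioi_of_eventually_hasDerivWithinAt hg'
  have hrest : ContinuousWithinAt (fun η ↦ 4 * g''' η - η * g η) (Ioi 0) 0 :=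
    (hg'''.const_mul 4).sub (continuousWithinAt_id.mul hgc)
  have hlim := (((hlin.const_mul 4).sub ((hquot.mul hgc'.tendsto).const_mul 4)).add
    (hquot''.const_mul 8)).add hrest.tendsto
  have hval : 4 * (-g''' 0 / 3) - 4 * (g' 0 * g' 0) + 8 * g''' 0 + (4 * g''' 0 - 0 * g 0)
      = 32 / 3 * g''' 0 - 4 * g' 0 ^ 2 := by
    ring
  rw [hval] at hlim
  refine hlim.congr' ?_
  filter_upwards [self_mem_nhdsWithin] with η hη
  have : η ≠ 0 := ne_of_gt hη
  rw [profileResidual]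
  field_simp
  ring

end profileResidual

theorem stmt13_general {g g' g'' g''' : ℝ → ℝ}
    (hg : ∀ᶠ x in 𝓝[≥] 0, HasDerivWithinAt g (g' x) (Ici 0) x)
    (hg' : ∀ᶠ x in 𝓝[≥] 0, HasDerivWithinAt g' (g'' x) (Ici 0) x)
    (hg'' : ∀ᶠ x in 𝓝[≥] 0, HasDerivWithinAt g'' (g''' x) (Ici 0) x)
    (hg''' : ContinuousWithinAt g''' (Ioi 0) 0)
    (hode : ∃ᶠ η in 𝓝[>] 0, profileResidual g g' g'' g''' η = 0) :
    g''' 0 = 3 / 8 * g' 0 ^ 2 := by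
  have hgc := continuousWithinAt_Ioi_of_eventually_hasDerivWithinAt hg
  have hgc' := continuousWithinAt_Ioi_of_eventually_hasDerivWithinAt hg'
  have hgc'' := continuousWithinAt_Ioi_of_eventually_hasDerivWithinAt hg''
  have hdiv (n : ℕ) : ∃ᶠ η in 𝓝[>] 0, profileResidual g g' g'' g''' η / η ^ n = 0 :=
    hode.mono fun η hη ↦ by rw [hη, zero_div]
  have h0 : 4 * g 0 = 0 := tendsto_nhds_unique_of_frequently_eq
    (profileResidual.tendsto_nhdsGT_zero hgc hgc' hgc'' hg''') tendsto_const_nhds hode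
  replace h0 : g 0 = 0 := by linarith
  have h2 : 6 * g'' 0 = 0 := tendsto_nhds_unique_of_frequently_eq
    (profileResidual.tendsto_div_sq hg hg' hgc'' hg''' h0) tendsto_const_nhds (hdiv 2)
  replace h2 : g'' 0 = 0 := by linarith
  have h3 : 32 / 3 * g''' 0 - 4 * g' 0 ^ 2 = 0 := tendsto_nhds_unique_of_frequently_eq
    (profileResidual.tendsto_div_cube hg hg'
      ((hg''.self_of_nhdsWithin self_mem_Ici).mono Ioi_subset_Ici_self) hg''' h0 h2)
    tendsto_const_nhds (hdiv 3)
  linarith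

/-- Let `ε > 0` and let `g : [0, ε) → ℝ` be a `C³` solution of the ODE on
`[0, ε)` with `g(0) = 0` and `g''(0) = 0`. Then `g'''(0) = (3/8)·g'(0)²`. -/
theorem stmt13 (ε : ℝ) (hε : 0 < ε)
    (g g' g'' g''' : ℝ → ℝ)
    (hg : ∀ η ∈ Set.Ico 0 ε, HasDerivWithinAt g (g' η) (Set.Ico 0 ε) η)
    (hg' : ∀ η ∈ Set.Ico 0 ε, HasDerivWithinAt g' (g'' η) (Set.Ico 0 ε) η)
    (hg'' : ∀ η ∈ Set.Ico 0 ε, HasDerivWithinAt g'' (g''' η) (Set.Ico 0 ε) η)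
    (hg''' : ContinuousOn g''' (Set.Ico 0 ε))
    (hode : ∀ η ∈ Set.Ico 0 ε,
      4 * g η - η ^ 4 * g η - 4 * η * g' η - 4 * η ^ 2 * g η * g' η
        + 8 * η ^ 2 * g'' η + 4 * η ^ 3 * g''' η = 0)
    (h0 : g 0 = 0) (h2 : g'' 0 = 0) :
    g''' 0 = (3 / 8) * g' 0 ^ 2 := by
  exact stmt13_general (eventually_nhdsGE_hasDerivWithinAt_Ici hε hg)
    (eventually_nhdsGE_hasDerivWithinAt_Ici hε hg') (eventually_nhdsGE_hasDerivWithinAt_Ici hε hg'')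
    ((hg''' 0 (left_mem_Ico.2 hε)).mono_of_mem_nhdsWithin (Ico_mem_nhdsGT hε))
    (Eventually.frequently <| mem_of_superset (Ico_mem_nhdsGT hε) hode)
end

section
/- Let ε > 0 and let g : [0, ε) → ℝ be three times continuously differentiable, satisfy the ODE 4g(η) − η⁴g(η) − 4ηg'(η) − 4η²g(η)g'(η) + 8η²g''(η) + 4η³g'''(η) = 0 on [0, ε), with g(0) = 0, g''(0) = 0 and g'(0) ≠ 0. Then there exists δ > 0 such that g''(η) > 0 for all η ∈ (0, δ); in particular g is convex in a right neighborhood of 0. -/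
/-!
Put `a = g'(0)` and `c = g'''(0)`. Divided by `η³`, the equation reads
`4 (g - η g') / η³ - η g - 4 (g / η) g' + 8 g'' / η + 4 g''' = 0`, and every term has a limit as
`η → 0⁺`: since `(g - η g')' = -η g''`, L'Hôpital's rule gives `(g - η g') / η³ → -c / 3`, while
`g / η → a` and `g'' / η → c`. Hence `-4c/3 - 4a² + 8c + 4c = 0`, that is `c = (3/8) a² > 0`, and
`g''` leaves the value `0` with positive slope.
-/

open Filter Set Topology

section RightNeighborhood

variable {a b c : ℝ}

lemma tendsto_nhdsGT_of_continuousWithinAt_Ico {X : Type*} [TopologicalSpace X] {f : ℝ → X}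
    (hab : a < b) (hf : ContinuousWithinAt f (Ico a b) a) : Tendsto f (𝓝[>] a) (𝓝 (f a)) :=
  ((continuousWithinAt_Ico_iff_Ici hab).mp hf).mono Ioi_subset_Ici_self

lemma eventually_nhdsGT_hasDerivAt_of_Ico {E : Type*} [NormedAddCommGroup E] [NormedSpace ℝ E]
    {f f' : ℝ → E} (hab : a < b)
    (hf : ∀ x ∈ Ico a b, HasDerivWithinAt f (f' x) (Ico a b) x) :
    ∀ᶠ x in 𝓝[>] a, HasDerivAt f (f' x) x := by
  filter_upwards [Ioo_mem_nhdsGT hab] with x hx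
  exact (hf x (Ioo_subset_Ico_self hx)).hasDerivAt (Ico_mem_nhds hx.1 hx.2)

variable {f f' f'' : ℝ → ℝ}

lemma tendsto_div_pow_succ_nhdsGT (n : ℕ) (hf : ∀ᶠ x in 𝓝[>] a, HasDerivAt f (f' x) x)
    (hfa : Tendsto f (𝓝[>] a) (𝓝 0))
    (hf' : Tendsto (fun x ↦ f' x / (x - a) ^ n) (𝓝[>] a) (𝓝 c)) :
    Tendsto (fun x ↦ f x / (x - a) ^ (n + 1)) (𝓝[>] a) (𝓝 (c / (n + 1))) := by
  have hpow : Tendsto (fun x ↦ (x - a) ^ (n + 1)) (𝓝[>] a) (𝓝 0) := by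
    have : Continuous fun x : ℝ ↦ (x - a) ^ (n + 1) := by fun_prop
    simpa using (this.tendsto a).mono_left nhdsWithin_le_nhds
  refine HasDerivAt.lhopital_zero_nhdsGT (g' := fun x ↦ (n + 1) * (x - a) ^ n) hf ?_ ?_ hfa hpow ?_
  · exact .of_forall fun x ↦ by simpa using ((hasDerivAt_id' x).sub_const a).fun_pow (n + 1)
  · filter_upwards [self_mem_nhdsWithin] with x hx
    have : 0 < x - a := sub_pos.mpr hx
    positivity
  · refine (hf'.div_const (n + 1 : ℝ)).congr fun x ↦ ?_
    rw [div_div, mul_comm]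

lemma tendsto_div_sub_nhdsGT (hf : ∀ᶠ x in 𝓝[>] a, HasDerivAt f (f' x) x)
    (hfa : Tendsto f (𝓝[>] a) (𝓝 0)) (hf' : Tendsto f' (𝓝[>] a) (𝓝 c)) :
    Tendsto (fun x ↦ f x / (x - a)) (𝓝[>] a) (𝓝 c) := by
  simpa using tendsto_div_pow_succ_nhdsGT 0 hf hfa (by simpa using hf')

lemma eventually_nhdsGT_pos_of_tendsto_deriv (hf : ∀ᶠ x in 𝓝[>] a, HasDerivAt f (f' x) x)
    (hfa : Tendsto f (𝓝[>] a) (𝓝 0)) (hf' : Tendsto f' (𝓝[>] a) (𝓝 c)) (hc : 0 < c) :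
    ∀ᶠ x in 𝓝[>] a, 0 < f x := by
  filter_upwards [self_mem_nhdsWithin,
    (tendsto_div_sub_nhdsGT hf hfa hf').eventually_const_lt hc] with x hx hquot
  exact (div_pos_iff_of_pos_right (sub_pos.mpr hx)).mp hquot

lemma tendsto_sub_mul_deriv_div_pow_nhdsGT (n : ℕ)
    (hf : ∀ᶠ x in 𝓝[>] a, HasDerivAt f (f' x) x)
    (hf' : ∀ᶠ x in 𝓝[>] a, HasDerivAt f' (f'' x) x)
    (hfa : Tendsto f (𝓝[>] a) (𝓝 0)) (hf'a : Tendsto f' (𝓝[>] a) (𝓝 b))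
    (hf'' : Tendsto (fun x ↦ f'' x / (x - a) ^ n) (𝓝[>] a) (𝓝 c)) :
    Tendsto (fun x ↦ (f x - (x - a) * f' x) / (x - a) ^ (n + 2)) (𝓝[>] a)
      (𝓝 (-c / (n + 2))) := by
  have hderiv : ∀ᶠ x in 𝓝[>] a,
      HasDerivAt (fun x ↦ f x - (x - a) * f' x) (-((x - a) * f'' x)) x := by
    filter_upwards [hf, hf'] with x hx hx'
    exact (hx.sub (((hasDerivAt_id x).sub_const a).mul hx')).congr_deriv (by simp)
  have hsub : Tendsto (fun x ↦ x - a) (𝓝[>] a) (𝓝 0) := by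
    simpa using ((continuous_sub_right a).tendsto a).mono_left nhdsWithin_le_nhds
  have hzero : Tendsto (fun x ↦ f x - (x - a) * f' x) (𝓝[>] a) (𝓝 0) := by
    simpa using hfa.sub (hsub.mul hf'a)
  have hquot : Tendsto (fun x ↦ -((x - a) * f'' x) / (x - a) ^ (n + 1)) (𝓝[>] a) (𝓝 (-c)) := by
    refine hf''.neg.congr' ?_
    filter_upwards [self_mem_nhdsWithin] with x hx
    have : x - a ≠ 0 := (sub_pos.mpr hx).ne'
    field_simp
    ring
  convert tendsto_div_pow_succ_nhdsGT (n + 1) hderiv hzero hquot using 3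
  push_cast
  ring

end RightNeighborhood

/-- The equation satisfied by `g = f'` when `u(r, t) = f(r / t^{1/4})` solves the epitaxial growth
equation `∂ₜu + Δ²u = det(D²u)`, encoded pointwise as a relation between `η` and the values
`y, y₁, y₂, y₃` at `η` of `g` and its first three derivatives. -/
def SelfSimilarODE (η y y₁ y₂ y₃ : ℝ) : Prop :=
  4 * y - η ^ 4 * y - 4 * η * y₁ - 4 * η ^ 2 * y * y₁ + 8 * η ^ 2 * y₂ + 4 * η ^ 3 * y₃ = 0

namespace SelfSimilarODE

lemma div_cube {η y y₁ y₂ y₃ : ℝ} (h : SelfSimilarODE η y y₁ y₂ y₃) (hη : η ≠ 0) :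
    4 * ((y - η * y₁) / η ^ 3) - η * y - 4 * (y / η * y₁) + 8 * (y₂ / η) + 4 * y₃ = 0 := by
  unfold SelfSimilarODE at h
  field_simp
  linear_combination h

lemma third_deriv_limit_eq {g g' g'' g''' : ℝ → ℝ} {a c : ℝ}
    (hode : ∀ᶠ η in 𝓝[>] 0, SelfSimilarODE η (g η) (g' η) (g'' η) (g''' η))
    (hg : ∀ᶠ η in 𝓝[>] 0, HasDerivAt g (g' η) η)
    (hg' : ∀ᶠ η in 𝓝[>] 0, HasDerivAt g' (g'' η) η)
    (hg'' : ∀ᶠ η in 𝓝[>] 0, HasDerivAt g'' (g''' η) η)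
    (hg_lim : Tendsto g (𝓝[>] 0) (𝓝 0)) (hg'_lim : Tendsto g' (𝓝[>] 0) (𝓝 a))
    (hg''_lim : Tendsto g'' (𝓝[>] 0) (𝓝 0)) (hg'''_lim : Tendsto g''' (𝓝[>] 0) (𝓝 c)) :
    c = 3 / 8 * a ^ 2 := by
  have hη : Tendsto (fun η : ℝ ↦ η) (𝓝[>] 0) (𝓝 0) := tendsto_id.mono_left nhdsWithin_le_nhds
  have hg_div : Tendsto (fun η ↦ g η / η) (𝓝[>] 0) (𝓝 a) := by
    simpa only [sub_zero] using tendsto_div_sub_nhdsGT hg hg_lim hg'_lim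
  have hg''_div : Tendsto (fun η ↦ g'' η / η) (𝓝[>] 0) (𝓝 c) := by
    simpa only [sub_zero] using tendsto_div_sub_nhdsGT hg'' hg''_lim hg'''_lim
  have hcube : Tendsto (fun η ↦ (g η - η * g' η) / η ^ 3) (𝓝[>] 0) (𝓝 (-c / 3)) := by
    convert tendsto_sub_mul_deriv_div_pow_nhdsGT 1 hg hg' hg_lim hg'_lim
      (by simpa only [sub_zero, pow_one] using hg''_div) using 2 <;> norm_num
  have hlim := ((((hcube.const_mul 4).sub (hη.mul hg_lim)).sub
    ((hg_div.mul hg'_lim).const_mul 4)).add (hg''_div.const_mul 8)).add (hg'''_lim.const_mul 4)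
  have hzero : 4 * (-c / 3) - 0 * 0 - 4 * (a * a) + 8 * c + 4 * c = 0 := by
    refine tendsto_nhds_unique (hlim.congr' ?_) tendsto_const_nhds
    filter_upwards [hode, self_mem_nhdsWithin] with η h hpos
    exact h.div_cube (ne_of_gt hpos)
  linear_combination 3 / 32 * hzero

end SelfSimilarODE

/-- Let `ε > 0` and let `g : [0, ε) → ℝ` be a `C³` solution of the ODE on
`[0, ε)` with `g(0) = 0`, `g''(0) = 0` and `g'(0) ≠ 0`. Then there exists `δ > 0` such that
`g''(η) > 0` for all `η ∈ (0, δ)`; in particular `g` is convex in a right neighborhood of `0`. -/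
theorem stmt14 (ε : ℝ) (hε : 0 < ε)
    (g g' g'' g''' : ℝ → ℝ)
    (hg : ∀ η ∈ Set.Ico 0 ε, HasDerivWithinAt g (g' η) (Set.Ico 0 ε) η)
    (hg' : ∀ η ∈ Set.Ico 0 ε, HasDerivWithinAt g' (g'' η) (Set.Ico 0 ε) η)
    (hg'' : ∀ η ∈ Set.Ico 0 ε, HasDerivWithinAt g'' (g''' η) (Set.Ico 0 ε) η)
    (hg''' : ContinuousOn g''' (Set.Ico 0 ε))
    (hode : ∀ η ∈ Set.Ico 0 ε,
      4 * g η - η ^ 4 * g η - 4 * η * g' η - 4 * η ^ 2 * g η * g' η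
        + 8 * η ^ 2 * g'' η + 4 * η ^ 3 * g''' η = 0)
    (h0 : g 0 = 0) (h2 : g'' 0 = 0) (h1 : g' 0 ≠ 0) :
    ∃ δ > 0, ∀ η : ℝ, 0 < η → η < δ → 0 < g'' η := by
  have hmem : (0 : ℝ) ∈ Ico 0 ε := left_mem_Ico.mpr hε
  have hlim {f : ℝ → ℝ} (hf : ContinuousWithinAt f (Ico 0 ε) 0) :
      Tendsto f (𝓝[>] 0) (𝓝 (f 0)) := tendsto_nhdsGT_of_continuousWithinAt_Ico hε hf
  have hg_lim : Tendsto g (𝓝[>] 0) (𝓝 0) := by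
    simpa only [h0] using hlim (hg 0 hmem).continuousWithinAt
  have hg'_lim := hlim (hg' 0 hmem).continuousWithinAt
  have hg''_lim : Tendsto g'' (𝓝[>] 0) (𝓝 0) := by
    simpa only [h2] using hlim (hg'' 0 hmem).continuousWithinAt
  have hg'''_lim := hlim (hg''' 0 hmem)
  have hg''_deriv := eventually_nhdsGT_hasDerivAt_of_Ico hε hg''
  have hode_right : ∀ᶠ η in 𝓝[>] 0, SelfSimilarODE η (g η) (g' η) (g'' η) (g''' η) := by
    filter_upwards [Ioo_mem_nhdsGT hε] with η hη using hode η (Ioo_subset_Ico_self hη)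
  have hthird : g''' 0 = 3 / 8 * g' 0 ^ 2 :=
    SelfSimilarODE.third_deriv_limit_eq hode_right (eventually_nhdsGT_hasDerivAt_of_Ico hε hg)
      (eventually_nhdsGT_hasDerivAt_of_Ico hε hg') hg''_deriv hg_lim hg'_lim hg''_lim hg'''_lim
  have hpos : 0 < g''' 0 := by rw [hthird]; positivity
  obtain ⟨δ, hδ, hsub⟩ := mem_nhdsGT_iff_exists_Ioo_subset.mp
    (eventually_nhdsGT_pos_of_tendsto_deriv hg''_deriv hg''_lim hg'''_lim hpos)
  exact ⟨δ, hδ, fun η hη hηδ ↦ hsub ⟨hη, hηδ⟩⟩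
end
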